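/- arXiv:1106.4733 — 2 statements merged into one kernel-verified Lean document; each statement's English description precedes it below -/
import Mathlib

section
/- Let L be an even positive definite lattice, k ∈ ℤ, t ∈ ℚ with t > 0, D an even divisor of 24, and Q = 24/D. Let φ ∈ J_{k,L;t}(v_η^D × ν) be a holomorphic Jacobi form, where the Heisenberg character ν is assumed trivial if Q is odd. Let m ≥ 1 be an integer coprime to Q, and for each positive divisor a of m fix σ_a ∈ SL₂(ℤ) with σ_a ≡ (a^{−1}, 0; 0, a) mod Q. Then the function ψ(τ,𝔷) := Σ_{ad=m, a>0} Σ_{b mod d} a^k · v_η^D(σ_a) · φ((aτ+bQ)/d, a𝔷) is a holomorphic Jacobi form of weight k and index mt for L: ψ ∈ J_{k,L;mt}(v_{η,m}^D × ν), where v_{η,m}^D is the character of SL₂(ℤ) defined by v_{η,m}^D(A) := v_η^D(A_m) for any A_m ∈ SL₂(ℤ) with A_m·(1,0;0,m) ≡ (1,0;0,m)·A mod Q. Moreover the character v_{η,m}^D depends only on m mod Q. -/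
open Complex Matrix
open scoped Real BigOperators Classical

noncomputable section

abbrev SL2Z := Matrix.SpecialLinearGroup (Fin 2) ℤ

/-- The integral bilinear form attached to a Gram matrix `S`. -/
def bilinZ {ι : Type*} [Fintype ι] (S : Matrix ι ι ℤ) (x y : ι → ℤ) : ℤ :=
  ∑ i, ∑ j, x i * S i j * y j

def bilinQ {ι : Type*} [Fintype ι] (S : Matrix ι ι ℤ) (x y : ι → ℚ) : ℚ :=
  ∑ i, ∑ j, x i * (S i j : ℚ) * y j

def bilinR {ι : Type*} [Fintype ι] (S : Matrix ι ι ℤ) (x y : ι → ℝ) : ℝ :=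
  ∑ i, ∑ j, x i * (S i j : ℝ) * y j

def bilinC {ι : Type*} [Fintype ι] (S : Matrix ι ι ℤ) (x y : ι → ℂ) : ℂ :=
  ∑ i, ∑ j, x i * (S i j : ℂ) * y j

/-- `S` is the Gram matrix of an even positive definite lattice. -/
structure IsEvenPosDef {ι : Type*} [Fintype ι] (S : Matrix ι ι ℤ) : Prop where
  symm : S.IsSymm
  posdef : ∀ x : ι → ℚ, x ≠ 0 → 0 < bilinQ S x x
  even_diag : ∀ i, (2 : ℤ) ∣ S i i

/-- `l ∈ (1/2) L^∨`, written in lattice coordinates:  `2(l,x) ∈ ℤ` for every lattice vector. -/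
def InHalfDual {ι : Type*} [Fintype ι] (S : Matrix ι ι ℤ) (l : ι → ℚ) : Prop :=
  ∀ x : ι → ℤ, ∃ m : ℤ, 2 * bilinQ S l (fun i => (x i : ℚ)) = m

/-- `φ` is a holomorphic Jacobi form of weight `k` and index `t` for the lattice `(ℤ^ι, S)`
with `SL₂(ℤ)`-character (multiplier system) `χ`, Heisenberg character `ν`,
and Fourier coefficients `f`. -/
structure IsJacobiForm {ι : Type*} [Fintype ι] (S : Matrix ι ι ℤ) (k t : ℚ)
    (χ : SL2Z → ℂ) (ν : (ι → ℤ) → (ι → ℤ) → ℂ)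
    (f : ℚ × (ι → ℚ) → ℂ) (φ : ℂ → (ι → ℂ) → ℂ) : Prop where
  holo : DifferentiableOn ℂ (fun p : ℂ × (ι → ℂ) => φ p.1 p.2) {p | 0 < p.1.im}
  modular : ∀ A : SL2Z, ∀ τ : ℂ, 0 < τ.im → ∀ z : ι → ℂ,
    φ (((A.1 0 0 : ℂ) * τ + (A.1 0 1 : ℂ)) / ((A.1 1 0 : ℂ) * τ + (A.1 1 1 : ℂ)))
        (fun i => z i / ((A.1 1 0 : ℂ) * τ + (A.1 1 1 : ℂ)))
      = χ A * ((A.1 1 0 : ℂ) * τ + (A.1 1 1 : ℂ)) ^ (k : ℂ)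
        * Complex.exp ((π : ℂ) * I * (t : ℂ) * (A.1 1 0 : ℂ) * bilinC S z z
            / ((A.1 1 0 : ℂ) * τ + (A.1 1 1 : ℂ)))
        * φ τ z
  elliptic : ∀ x y : ι → ℤ, ∀ τ : ℂ, 0 < τ.im → ∀ z : ι → ℂ,
    φ τ (fun i => z i + (x i : ℂ) * τ + (y i : ℂ))
      = ν x y * Complex.exp (-((π : ℂ) * I * (t : ℂ))
            * ((bilinZ S x x : ℂ) * τ + 2 * bilinC S (fun i => (x i : ℂ)) z))
        * φ τ z
  support : ∀ p : ℚ × (ι → ℚ), f p ≠ 0 →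
    0 ≤ p.1 ∧ InHalfDual S p.2 ∧ 0 ≤ 2 * p.1 * t - bilinQ S p.2 p.2
  expansion : ∀ τ : ℂ, 0 < τ.im → ∀ z : ι → ℂ,
    HasSum (fun p : ℚ × (ι → ℚ) =>
        f p * Complex.exp (2 * (π : ℂ) * I *
          ((p.1 : ℂ) * τ + bilinC S (fun i => (p.2 i : ℂ)) z))) (φ τ z)

/-- The Fourier coefficients `f` are supported on indices of positive hyperbolic norm
(cusp form condition). -/
def IsCuspSupport {ι : Type*} [Fintype ι] (S : Matrix ι ι ℤ) (t : ℚ)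
    (f : ℚ × (ι → ℚ) → ℂ) : Prop :=
  ∀ p : ℚ × (ι → ℚ), f p ≠ 0 → 0 < 2 * p.1 * t - bilinQ S p.2 p.2

/-- `c` is a root of unity. -/
def HasFiniteOrder (c : ℂ) : Prop := ∃ N : ℕ, 0 < N ∧ c ^ N = 1

/-- The quadratic character mod 4. -/
def chi4 (n : ℤ) : ℂ := if n % 4 = 1 then 1 else if n % 4 = 3 then -1 else 0

/-- The classical Jacobi theta-series of characteristic `(1/2,1/2)`. -/
def jtheta (τ z : ℂ) : ℂ :=
  ∑' n : ℤ, chi4 n *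
    Complex.exp (2 * (π : ℂ) * I * (((n : ℂ) ^ 2 * τ) / 8 + (n : ℂ) * z / 2))

/-- The Dedekind eta function. -/
def dedekindEta (τ : ℂ) : ℂ :=
  Complex.exp ((π : ℂ) * I * τ / 12) *
    ∏' n : ℕ, (1 - Complex.exp (2 * (π : ℂ) * I * ((n : ℂ) + 1) * τ))

/-- Congruence condition `Am·(1,0;0,m) ≡ (1,0;0,m)·A  (mod Q)`. -/
def CongrCond (Q m : ℕ) (A Am : SL2Z) : Prop :=
  ∀ i j, (Am.1 * !![(1 : ℤ), 0; 0, (m : ℤ)]) i j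
      ≡ (!![(1 : ℤ), 0; 0, (m : ℤ)] * A.1) i j [ZMOD (Q : ℤ)]

/-- `σ_a ≡ (a⁻¹, 0; 0, a) (mod Q)`. -/
def SigmaCond (Q : ℕ) (a : ℕ) (σa : SL2Z) : Prop :=
  ∃ a' : ℤ, (a : ℤ) * a' ≡ 1 [ZMOD (Q : ℤ)] ∧
    σa.1 0 0 ≡ a' [ZMOD (Q : ℤ)] ∧ σa.1 0 1 ≡ 0 [ZMOD (Q : ℤ)] ∧
    σa.1 1 0 ≡ 0 [ZMOD (Q : ℤ)] ∧ σa.1 1 1 ≡ (a : ℤ) [ZMOD (Q : ℤ)]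

/-- The `m`-th Hecke translate `(φ|_{k,t} T_-^{(Q)}(m))(τ,𝔷)
    = ∑_{ad=m, a>0} ∑_{b mod d} a^k v_η^D(σ_a) φ((aτ+bQ)/d, a𝔷)`. -/
def heckeSum {ι : Type*} [Fintype ι] (φ : ℂ → (ι → ℂ) → ℂ) (vη : SL2Z → ℂ)
    (σ : ℕ → SL2Z) (k : ℤ) (Q m : ℕ) (τ : ℂ) (z : ι → ℂ) : ℂ :=
  ∑ a ∈ m.divisors, ∑ bb ∈ Finset.range (m / a),
    (a : ℂ) ^ k * vη (σ a)
      * φ (((a : ℂ) * τ + (bb : ℂ) * (Q : ℂ)) / ((m / a : ℕ) : ℂ)) (fun i => (a : ℂ) * z i)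

/-- The `m`-th term `m⁻¹(φ|_k T_-^{(Q)}(m)) e^{2πi(m/Q)ω}` of the lifting, as a function of
`(τ, 𝔷, ω)`; it is zero unless `m ≥ 1` and `m ≡ μ (mod Q)`. -/
def liftTerm {ι : Type*} [Fintype ι] (φ : ℂ → (ι → ℂ) → ℂ) (vη : SL2Z → ℂ)
    (σ : ℕ → SL2Z) (k : ℤ) (Q : ℕ) (μ : ℤ) (m : ℕ) (p : ℂ × (ι → ℂ) × ℂ) : ℂ :=
  if 1 ≤ m ∧ (m : ℤ) ≡ μ [ZMOD (Q : ℤ)] then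
    (m : ℂ)⁻¹ * heckeSum φ vη σ k Q m p.1 p.2.1
      * Complex.exp (2 * (π : ℂ) * I * ((m : ℂ) / (Q : ℂ)) * p.2.2)
  else 0

/-- The tube domain `H(L(N))` of the even lattice `L(N)`, `N = Qt`. -/
def tubeDom {ι : Type*} [Fintype ι] (S : Matrix ι ι ℤ) (N : ℚ) : Set (ℂ × (ι → ℂ) × ℂ) :=
  {p | 0 < p.1.im ∧ 0 < p.2.2.im ∧
    (N : ℝ) * bilinR S (fun i => (p.2.1 i).im) (fun i => (p.2.1 i).im)
      < 2 * p.1.im * p.2.2.im}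

/-! ### Part 1: the eta character -/

lemma dedekindEta_ne_zero {τ : ℂ} (h : 0 < τ.im) : dedekindEta τ ≠ 0 := by
  have h1 := ModularForm.eta_ne_zero (z := τ) h
  have h2 : dedekindEta τ = ModularForm.eta τ := by
    unfold dedekindEta ModularForm.eta
    congr 1
    · unfold Function.Periodic.qParam
      congr 1
      push_cast
      ring
    · apply tprod_congr
      intro n
      rw [ModularForm.eta_q_eq_cexp]
  rwa [h2]

lemma dedekindEta_add_one (τ : ℂ) :
    dedekindEta (τ + 1) = Complex.exp ((π : ℂ) * I / 12) * dedekindEta τ := by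
  unfold dedekindEta
  rw [← mul_assoc, ← Complex.exp_add]
  congr 1
  · congr 1; ring
  · apply tprod_congr
    intro n
    congr 1
    rw [show 2 * (π : ℂ) * I * ((n : ℂ) + 1) * (τ + 1)
      = 2 * (π : ℂ) * I * ((n : ℂ) + 1) * τ + ((n + 1 : ℤ) : ℂ) * (2 * π * I) by push_cast; ring]
    rw [Complex.exp_add, Complex.exp_int_mul_two_pi_mul_I, mul_one]

lemma sl2_det (A : SL2Z) : A.1 0 0 * A.1 1 1 - A.1 0 1 * A.1 1 0 = 1 := by
  have := A.2
  rwa [Matrix.det_fin_two] at this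

lemma sl2_denom_ne (A : SL2Z) {τ : ℂ} (h : 0 < τ.im) :
    (A.1 1 0 : ℂ) * τ + (A.1 1 1 : ℂ) ≠ 0 := by
  intro h0
  have him := congrArg Complex.im h0
  have hre := congrArg Complex.re h0
  simp at him hre
  have hc : A.1 1 0 = 0 := by
    rcases him with h1 | h1
    · exact_mod_cast h1
    · exact absurd h1 h.ne'
  have hd : A.1 1 1 = 0 := by
    rw [hc] at hre
    simp at hre
    exact_mod_cast hre
  have := sl2_det A
  rw [hc, hd] at this
  simp at this

lemma sl2_im_pos (A : SL2Z) {τ : ℂ} (h : 0 < τ.im) :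
    0 < (((A.1 0 0 : ℂ) * τ + (A.1 0 1 : ℂ)) / ((A.1 1 0 : ℂ) * τ + (A.1 1 1 : ℂ))).im := by
  have hne := sl2_denom_ne A h
  have hdet : (A.1 0 0 : ℝ) * A.1 1 1 - A.1 0 1 * A.1 1 0 = 1 := by exact_mod_cast sl2_det A
  have hn : 0 < Complex.normSq ((A.1 1 0 : ℂ) * τ + (A.1 1 1 : ℂ)) := Complex.normSq_pos.mpr hne
  have : (((A.1 0 0 : ℂ) * τ + (A.1 0 1 : ℂ)) / ((A.1 1 0 : ℂ) * τ + (A.1 1 1 : ℂ))).im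
     = τ.im / Complex.normSq ((A.1 1 0 : ℂ) * τ + (A.1 1 1 : ℂ)) := by
    rw [Complex.div_im]
    simp
    field_simp
    linear_combination hdet
  rw [this]
  positivity

def etaPsi (a b c d : ℤ) : ℤ :=
  (1 - c ^ 2) * (b * d + 3 * (c - 1) * d + c + 3) + c * (a + d - 3)

lemma etaPsi_T (a b c d : ℤ) (h : a * d - b * c = 1) :
    etaPsi a (a + b) c (c + d) ≡ etaPsi a b c d + 1 [ZMOD 12] := by
  have h4 : etaPsi a (a + b) c (c + d) ≡ etaPsi a b c d + 1 [ZMOD 4] := by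
    have key : ∀ a b c d : ZMod 4, a * d - b * c = 1 →
      (1 - c ^ 2) * ((a + b) * (c + d) + 3 * (c - 1) * (c + d) + c + 3) + c * (a + (c + d) - 3)
      = (1 - c ^ 2) * (b * d + 3 * (c - 1) * d + c + 3) + c * (a + d - 3) + 1 := by decide
    refine (ZMod.intCast_eq_intCast_iff _ _ 4).1 ?_
    have := key a b c d (by exact_mod_cast congrArg (Int.cast : ℤ → ZMod 4) h)
    unfold etaPsi
    push_cast
    exact this
  have h3 : etaPsi a (a + b) c (c + d) ≡ etaPsi a b c d + 1 [ZMOD 3] := by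
    have key : ∀ a b c d : ZMod 3, a * d - b * c = 1 →
      (1 - c ^ 2) * ((a + b) * (c + d) + 3 * (c - 1) * (c + d) + c + 3) + c * (a + (c + d) - 3)
      = (1 - c ^ 2) * (b * d + 3 * (c - 1) * d + c + 3) + c * (a + d - 3) + 1 := by decide
    refine (ZMod.intCast_eq_intCast_iff _ _ 3).1 ?_
    have := key a b c d (by exact_mod_cast congrArg (Int.cast : ℤ → ZMod 3) h)
    unfold etaPsi
    push_cast
    exact this
  unfold Int.ModEq at *
  omega

lemma etaPsi_S (a b c d : ℤ) (h : a * d - b * c = 1) :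
    etaPsi b (-a) d (-c) ≡ etaPsi a b c d - 3 [ZMOD 12] := by
  have h4 : etaPsi b (-a) d (-c) ≡ etaPsi a b c d - 3 [ZMOD 4] := by
    have key : ∀ a b c d : ZMod 4, a * d - b * c = 1 →
      (1 - d ^ 2) * ((-a) * (-c) + 3 * (d - 1) * (-c) + d + 3) + d * (b + (-c) - 3)
      = (1 - c ^ 2) * (b * d + 3 * (c - 1) * d + c + 3) + c * (a + d - 3) - 3 := by decide
    refine (ZMod.intCast_eq_intCast_iff _ _ 4).1 ?_
    have := key a b c d (by exact_mod_cast congrArg (Int.cast : ℤ → ZMod 4) h)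
    unfold etaPsi
    push_cast
    exact this
  have h3 : etaPsi b (-a) d (-c) ≡ etaPsi a b c d - 3 [ZMOD 3] := by
    have key : ∀ a b c d : ZMod 3, a * d - b * c = 1 →
      (1 - d ^ 2) * ((-a) * (-c) + 3 * (d - 1) * (-c) + d + 3) + d * (b + (-c) - 3)
      = (1 - c ^ 2) * (b * d + 3 * (c - 1) * d + c + 3) + c * (a + d - 3) - 3 := by decide
    refine (ZMod.intCast_eq_intCast_iff _ _ 3).1 ?_
    have := key a b c d (by exact_mod_cast congrArg (Int.cast : ℤ → ZMod 3) h)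
    unfold etaPsi
    push_cast
    exact this
  unfold Int.ModEq at *
  omega

lemma root_zpow_congr {ζ : ℂ} {Q : ℕ} (hζ : ζ ^ Q = 1) (h0 : ζ ≠ 0) {x y : ℤ}
    (h : x ≡ y [ZMOD (Q : ℤ)]) : ζ ^ x = ζ ^ y := by
  obtain ⟨c, hc⟩ := h.dvd
  have : y = x + Q * c := by linarith
  rw [this, zpow_add₀ h0, _root_.zpow_mul, zpow_natCast, hζ, _root_.one_zpow, mul_one]

def psiM (A : SL2Z) : ℤ := etaPsi (A.1 0 0) (A.1 0 1) (A.1 1 0) (A.1 1 1)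

lemma psiM_mul_T (A : SL2Z) : psiM (A * ModularGroup.T) ≡ psiM A + 1 [ZMOD 12] := by
  have h := etaPsi_T _ _ _ _ (sl2_det A)
  unfold psiM
  convert h using 2 <;>
    simp [Matrix.SpecialLinearGroup.coe_mul, ModularGroup.coe_T, Matrix.mul_apply, Fin.sum_univ_two]

lemma psiM_mul_S (A : SL2Z) : psiM (A * ModularGroup.S) ≡ psiM A - 3 [ZMOD 12] := by
  have h := etaPsi_S _ _ _ _ (sl2_det A)
  unfold psiM
  convert h using 2 <;>
    simp [Matrix.SpecialLinearGroup.coe_mul, ModularGroup.coe_S, Matrix.mul_apply, Fin.sum_univ_two]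

section etaChar
variable {D : ℕ} {vη : SL2Z → ℂ}

lemma vη_mul
    (hvη : ∀ A : SL2Z, ∀ τ : ℂ, 0 < τ.im →
      dedekindEta (((A.1 0 0 : ℂ) * τ + (A.1 0 1 : ℂ))
            / ((A.1 1 0 : ℂ) * τ + (A.1 1 1 : ℂ))) ^ D
        = vη A * ((A.1 1 0 : ℂ) * τ + (A.1 1 1 : ℂ)) ^ (D / 2) * dedekindEta τ ^ D)
    (A B : SL2Z) : vη (A * B) = vη A * vη B := by
  obtain ⟨τ, hI⟩ : ∃ τ : ℂ, 0 < τ.im := ⟨I, by simp⟩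
  have hB := sl2_denom_ne B hI
  have hBp := sl2_im_pos B hI
  have hAB := sl2_denom_ne (A * B) hI
  have hA := sl2_denom_ne A hBp
  have e1 := hvη (A * B) τ hI
  have e2 := hvη A _ hBp
  have e3 := hvη B τ hI
  have e00 : (A * B).1 0 0 = A.1 0 0 * B.1 0 0 + A.1 0 1 * B.1 1 0 := by
    simp [Matrix.mul_apply, Fin.sum_univ_two]
  have e01 : (A * B).1 0 1 = A.1 0 0 * B.1 0 1 + A.1 0 1 * B.1 1 1 := by
    simp [Matrix.mul_apply, Fin.sum_univ_two]
  have e10 : (A * B).1 1 0 = A.1 1 0 * B.1 0 0 + A.1 1 1 * B.1 1 0 := by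
    simp [Matrix.mul_apply, Fin.sum_univ_two]
  have e11 : (A * B).1 1 1 = A.1 1 0 * B.1 0 1 + A.1 1 1 * B.1 1 1 := by
    simp [Matrix.mul_apply, Fin.sum_univ_two]
  have hj : ((A * B).1 1 0 : ℂ) * τ + ((A * B).1 1 1 : ℂ)
     = ((A.1 1 0 : ℂ) * (((B.1 0 0 : ℂ) * τ + (B.1 0 1 : ℂ)) / ((B.1 1 0 : ℂ) * τ + (B.1 1 1 : ℂ)))
        + (A.1 1 1 : ℂ)) * ((B.1 1 0 : ℂ) * τ + (B.1 1 1 : ℂ)) := by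
    rw [e10, e11, add_mul, mul_assoc, div_mul_cancel₀ _ hB]
    push_cast
    ring
  have hnum : ((A * B).1 0 0 : ℂ) * τ + ((A * B).1 0 1 : ℂ)
     = ((A.1 0 0 : ℂ) * (((B.1 0 0 : ℂ) * τ + (B.1 0 1 : ℂ)) / ((B.1 1 0 : ℂ) * τ + (B.1 1 1 : ℂ)))
        + (A.1 0 1 : ℂ)) * ((B.1 1 0 : ℂ) * τ + (B.1 1 1 : ℂ)) := by
    rw [e00, e01, add_mul, mul_assoc, div_mul_cancel₀ _ hB]
    push_cast
    ring
  rw [hnum, hj, mul_div_mul_right _ _ hB, e2, e3, mul_pow] at e1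
  have hη := pow_ne_zero D (dedekindEta_ne_zero hI)
  have h1 := pow_ne_zero (D / 2) hA
  have h2 := pow_ne_zero (D / 2) hB
  have h3 := mul_ne_zero (mul_ne_zero h1 h2) hη
  apply mul_right_cancel₀ h3
  linear_combination -e1

lemma vη_one
    (hvη : ∀ A : SL2Z, ∀ τ : ℂ, 0 < τ.im →
      dedekindEta (((A.1 0 0 : ℂ) * τ + (A.1 0 1 : ℂ))
            / ((A.1 1 0 : ℂ) * τ + (A.1 1 1 : ℂ))) ^ D
        = vη A * ((A.1 1 0 : ℂ) * τ + (A.1 1 1 : ℂ)) ^ (D / 2) * dedekindEta τ ^ D) :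
    vη 1 = 1 := by
  have hI : 0 < (I : ℂ).im := by simp
  have e1 := hvη 1 I hI
  have hη := pow_ne_zero D (dedekindEta_ne_zero hI)
  norm_num at e1
  apply mul_right_cancel₀ hη
  rw [one_mul]
  exact e1.symm

lemma vη_T
    (hvη : ∀ A : SL2Z, ∀ τ : ℂ, 0 < τ.im →
      dedekindEta (((A.1 0 0 : ℂ) * τ + (A.1 0 1 : ℂ))
            / ((A.1 1 0 : ℂ) * τ + (A.1 1 1 : ℂ))) ^ D
        = vη A * ((A.1 1 0 : ℂ) * τ + (A.1 1 1 : ℂ)) ^ (D / 2) * dedekindEta τ ^ D) :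
    vη ModularGroup.T = Complex.exp ((π : ℂ) * I / 12) ^ D := by
  have hI : 0 < (I : ℂ).im := by simp
  have e1 := hvη ModularGroup.T I hI
  have hη := pow_ne_zero D (dedekindEta_ne_zero hI)
  simp only [ModularGroup.T] at e1
  norm_num at e1
  rw [dedekindEta_add_one, mul_pow] at e1
  exact (mul_right_cancel₀ hη e1).symm

lemma vη_ne_zero
    (hvη : ∀ A : SL2Z, ∀ τ : ℂ, 0 < τ.im →
      dedekindEta (((A.1 0 0 : ℂ) * τ + (A.1 0 1 : ℂ))
            / ((A.1 1 0 : ℂ) * τ + (A.1 1 1 : ℂ))) ^ D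
        = vη A * ((A.1 1 0 : ℂ) * τ + (A.1 1 1 : ℂ)) ^ (D / 2) * dedekindEta τ ^ D)
    (A : SL2Z) : vη A ≠ 0 := by
  intro h
  have h1 := vη_mul hvη A A⁻¹
  rw [mul_inv_cancel, vη_one hvη, h] at h1
  simp at h1

lemma vη_formula
    (hvη : ∀ A : SL2Z, ∀ τ : ℂ, 0 < τ.im →
      dedekindEta (((A.1 0 0 : ℂ) * τ + (A.1 0 1 : ℂ))
            / ((A.1 1 0 : ℂ) * τ + (A.1 1 1 : ℂ))) ^ D
        = vη A * ((A.1 1 0 : ℂ) * τ + (A.1 1 1 : ℂ)) ^ (D / 2) * dedekindEta τ ^ D)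
    (h12 : vη ModularGroup.T ^ 12 = 1)
    (A : SL2Z) : vη A = vη ModularGroup.T ^ psiM A := by
  have hT0 := vη_ne_zero hvη ModularGroup.T
  have hS0 := vη_ne_zero hvη ModularGroup.S
  have hS : vη ModularGroup.S = vη ModularGroup.T ^ (-3 : ℤ) := by
    have hrel : (ModularGroup.S * ModularGroup.T) * (ModularGroup.S * ModularGroup.T) *
        (ModularGroup.S * ModularGroup.T) = ModularGroup.S * ModularGroup.S := by
      apply Subtype.ext
      simp [Matrix.SpecialLinearGroup.coe_mul, ModularGroup.coe_S, ModularGroup.coe_T]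
    have h2 := congrArg vη hrel
    simp only [vη_mul hvη] at h2
    have h3 : vη ModularGroup.S * vη ModularGroup.T ^ 3 = 1 := by
      apply mul_left_cancel₀ (mul_ne_zero hS0 hS0)
      linear_combination h2
    rw [_root_.zpow_neg]
    exact eq_inv_of_mul_eq_one_left (by exact_mod_cast h3)
  have hmulT : ∀ B, vη ModularGroup.T ^ psiM (B * ModularGroup.T)
      = vη ModularGroup.T ^ psiM B * vη ModularGroup.T := by
    intro B
    rw [root_zpow_congr h12 hT0 (psiM_mul_T B), zpow_add₀ hT0, zpow_one]
  have hmulS : ∀ B, vη ModularGroup.T ^ psiM (B * ModularGroup.S)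
      = vη ModularGroup.T ^ psiM B * vη ModularGroup.S := by
    intro B
    rw [root_zpow_congr h12 hT0 (psiM_mul_S B), sub_eq_add_neg, zpow_add₀ hT0, hS]
  have hmem : A ∈ Subgroup.closure {ModularGroup.S, ModularGroup.T} := by
    rw [SpecialLinearGroup.SL2Z_generators]; trivial
  induction hmem using Subgroup.closure_induction_right with
  | one =>
    rw [vη_one hvη]
    simp [psiM, etaPsi]
  | mul_right x hx y hy ih =>
    rcases hy with rfl | hy
    · rw [vη_mul hvη, hmulS, ih]
    · rw [Set.mem_singleton_iff] at hy
      subst hy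
      rw [vη_mul hvη, hmulT, ih]
  | mul_inv_cancel x hx y hy ih =>
    rcases hy with rfl | hy
    · apply mul_right_cancel₀ hS0
      rw [← vη_mul hvη, ← hmulS, inv_mul_cancel_right, ih]
    · rw [Set.mem_singleton_iff] at hy
      subst hy
      apply mul_right_cancel₀ hT0
      rw [← vη_mul hvη, ← hmulT, inv_mul_cancel_right, ih]

lemma etaPsi_congr {Q : ℤ} {a b c d a' b' c' d' : ℤ} (ha : a ≡ a' [ZMOD Q])
    (hb : b ≡ b' [ZMOD Q]) (hc : c ≡ c' [ZMOD Q]) (hd : d ≡ d' [ZMOD Q]) :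
    etaPsi a b c d ≡ etaPsi a' b' c' d' [ZMOD Q] := by
  unfold etaPsi
  gcongr

lemma vη_congr
    (hvη : ∀ A : SL2Z, ∀ τ : ℂ, 0 < τ.im →
      dedekindEta (((A.1 0 0 : ℂ) * τ + (A.1 0 1 : ℂ))
            / ((A.1 1 0 : ℂ) * τ + (A.1 1 1 : ℂ))) ^ D
        = vη A * ((A.1 1 0 : ℂ) * τ + (A.1 1 1 : ℂ)) ^ (D / 2) * dedekindEta τ ^ D)
    (hD2 : Even D) (hD24 : D ∣ 24) (hDpos : 0 < D)
    (Q : ℕ) (hQ : Q = 24 / D) {A B : SL2Z}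
    (h : (Int.castRingHom (ZMod Q)).mapMatrix A.1 = (Int.castRingHom (ZMod Q)).mapMatrix B.1) :
    vη A = vη B := by
  have hDQ : D * Q = 24 := by rw [hQ]; exact Nat.mul_div_cancel' hD24
  have hTQ : vη ModularGroup.T ^ Q = 1 := by
    rw [vη_T hvη, ← pow_mul, hDQ, ← Complex.exp_nat_mul]
    rw [Complex.exp_eq_one_iff]
    exact ⟨1, by push_cast; ring⟩
  have h12 : vη ModularGroup.T ^ 12 = 1 := by
    obtain ⟨e, he⟩ := hD2
    have : 12 = Q * e := by
      subst he; nlinarith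
    rw [this, pow_mul, hTQ, one_pow]
  have hent : ∀ i j, A.1 i j ≡ B.1 i j [ZMOD (Q : ℤ)] := by
    intro i j
    have := congrFun (congrFun h i) j
    exact (ZMod.intCast_eq_intCast_iff _ _ Q).1 (by simpa using this)
  rw [vη_formula hvη h12 A, vη_formula hvη h12 B]
  exact root_zpow_congr hTQ (vη_ne_zero hvη _)
    (etaPsi_congr (hent _ _) (hent _ _) (hent _ _) (hent _ _))

end etaChar

/-! ### Part 2: Hecke representatives -/

def heckeM (Q m : ℕ) (x : (_ : ℕ) × ℕ) : Matrix (Fin 2) (Fin 2) ℤ :=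
  !![(x.1 : ℤ), (x.2 : ℤ) * (Q : ℤ); 0, ((m / x.1 : ℕ) : ℤ)]

def heckeIdx (m : ℕ) : Finset ((_ : ℕ) × ℕ) := m.divisors.sigma (fun a => Finset.range (m / a))

lemma mem_heckeIdx {m : ℕ} {x : (_ : ℕ) × ℕ} :
    x ∈ heckeIdx m ↔ (x.1 ∣ m ∧ m ≠ 0) ∧ x.2 < m / x.1 := by
  simp [heckeIdx]

lemma hecke_reduce {Q m : ℕ} (hm : 1 ≤ m) (hcop : Nat.Coprime m Q)
    (N : Matrix (Fin 2) (Fin 2) ℤ) (hN : N.det = m) :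
    ∃ y ∈ heckeIdx m, ∃ B : SL2Z, N = B.1 * heckeM Q m y := by
  rw [Matrix.det_fin_two] at hN
  set n1 := N 0 0 with hn1
  set n2 := N 0 1 with hn2
  set n3 := N 1 0 with hn3
  set n4 := N 1 1 with hn4
  have hm0 : (m : ℤ) ≠ 0 := by positivity
  have hg : 0 < Int.gcd n1 n3 := by
    rw [Nat.pos_iff_ne_zero]
    intro h0
    rw [Int.gcd_eq_zero_iff] at h0
    rw [h0.1, h0.2] at hN
    simp at hN
    omega
  set g := Int.gcd n1 n3 with hgdef
  obtain ⟨p, hp⟩ : (g : ℤ) ∣ n1 := Int.gcd_dvd_left ..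
  obtain ⟨r, hr⟩ : (g : ℤ) ∣ n3 := Int.gcd_dvd_right ..
  obtain ⟨u, v, huv⟩ : ∃ u v : ℤ, (g : ℤ) = n1 * u + n3 * v :=
    ⟨_, _, Int.gcd_eq_gcd_ab n1 n3⟩
  have hgz : (g : ℤ) ≠ 0 := by positivity
  have hpr : p * u + r * v = 1 := by
    apply mul_left_cancel₀ hgz
    rw [hp, hr] at huv
    linarith
  have hgd : (g : ℤ) * (p * n4 - r * n2) = m := by
    rw [hp, hr] at hN; linarith
  have hgm : g ∣ m := by
    have : (g : ℤ) ∣ (m : ℤ) := ⟨_, hgd.symm⟩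
    exact_mod_cast this
  set d := m / g with hd
  have hgd' : g * d = m := Nat.mul_div_cancel' hgm
  have hdz : (d : ℤ) = p * n4 - r * n2 := by
    apply mul_left_cancel₀ hgz
    rw [hgd]; exact_mod_cast hgd'
  have hdpos : 0 < d := by
    rcases Nat.eq_zero_or_pos d with h | h
    · rw [h] at hgd'; omega
    · exact h
  have hdQ : Nat.Coprime d Q := Nat.Coprime.coprime_dvd_left ⟨g, by rw [mul_comm]; exact hgd'.symm⟩ hcop
  obtain ⟨e, f', hef⟩ : ∃ e f' : ℤ, (d : ℤ) * e + Q * f' = 1 := by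
    have h := Nat.gcd_eq_gcd_ab d Q
    rw [hdQ] at h
    exact ⟨_, _, by exact_mod_cast h.symm⟩
  set h := u * n2 + v * n4 with hh
  have hdz0 : (d : ℤ) ≠ 0 := by positivity
  have hb0 := Int.emod_nonneg (h * f') hdz0
  have hb1 := Int.emod_lt_of_pos (h * f') (by exact_mod_cast hdpos : (0 : ℤ) < d)
  have hb2 := Int.emod_add_mul_ediv (h * f') d
  set bz := (h * f') % d with hbz
  set q0 := (h * f') / d with hq0
  obtain ⟨b, hb⟩ := Int.eq_ofNat_of_zero_le hb0
  -- h = b Q + j d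
  set j := h * e + q0 * Q with hj
  have hhb : h = b * Q + j * d := by
    rw [hj, ← hb]
    linear_combination (-h) * hef - (Q : ℤ) * hb2
  refine ⟨⟨g, b⟩, mem_heckeIdx.2 ⟨⟨hgm, by omega⟩, ?_⟩, ⟨!![p, p * j - v; r, r * j + u], ?_⟩, ?_⟩
  · show b < d
    omega
  · rw [Matrix.det_fin_two_of]
    linear_combination hpr
  · have e2 : n2 = p * (b * Q) + (p * j - v) * d := by
      have : p * h - v * d = n2 := by
        rw [hdz, hh]; linear_combination n2 * hpr
      linear_combination -this + p * hhb
    have e4 : n4 = r * (b * Q) + (r * j + u) * d := by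
      have : r * h + u * d = n4 := by
        rw [hdz, hh]; linear_combination n4 * hpr
      linear_combination -this + r * hhb
    ext i k
    fin_cases i <;> fin_cases k <;>
      simp only [heckeM, Matrix.mul_apply, Fin.sum_univ_two, Fin.zero_eta, Fin.mk_one, Fin.isValue,
        Matrix.of_apply, Matrix.cons_val', Matrix.cons_val_zero, Matrix.cons_val_one,
        Matrix.cons_val_fin_one, mul_zero, add_zero]
    · rw [← hn1, hp]; ring
    · rw [← hn2]; exact e2
    · rw [← hn3, hr]; ring
    · rw [← hn4]; exact e4

lemma hecke_unique {Q m : ℕ} (hcop : Nat.Coprime m Q) {x y : (_ : ℕ) × ℕ}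
    (hx : x ∈ heckeIdx m) (hy : y ∈ heckeIdx m) (C : SL2Z)
    (h : heckeM Q m x = C.1 * heckeM Q m y) : x = y := by
  obtain ⟨a, b⟩ := x
  obtain ⟨a', b'⟩ := y
  rw [mem_heckeIdx] at hx hy
  obtain ⟨⟨ha, hm0⟩, hb⟩ := hx
  obtain ⟨⟨ha', -⟩, hb'⟩ := hy
  simp only at ha hb ha' hb'
  have hapos : 0 < a := Nat.pos_of_dvd_of_pos ha (Nat.pos_of_ne_zero hm0)
  have hapos' : 0 < a' := Nat.pos_of_dvd_of_pos ha' (Nat.pos_of_ne_zero hm0)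
  have h00 := congrFun (congrFun h 0) 0
  have h01 := congrFun (congrFun h 0) 1
  have h10 := congrFun (congrFun h 1) 0
  simp [heckeM, Matrix.mul_apply, Fin.sum_univ_two] at h00 h01 h10
  have hdet := sl2_det C
  have hc : C.1 1 0 = 0 := by
    rcases h10 with h | h
    · exact h
    · omega
  rw [hc, mul_zero, sub_zero] at hdet
  have hp : C.1 0 0 = 1 := by
    rcases Int.eq_one_or_neg_one_of_mul_eq_one hdet with h | h
    · exact h
    · rw [h] at h00; omega
  rw [hp, one_mul] at h00 h01
  have haa : a = a' := by exact_mod_cast h00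
  subst haa
  set d := m / a with hd
  have hdm : d ∣ m := Nat.div_dvd_of_dvd ha
  have hdQ : IsCoprime (d : ℤ) (Q : ℤ) :=
    Nat.isCoprime_iff_coprime.2 (Nat.Coprime.coprime_dvd_left hdm hcop)
  have hdvd : (d : ℤ) ∣ (b - b') := by
    apply hdQ.dvd_of_dvd_mul_right
    refine ⟨C.1 0 1, ?_⟩
    have hdc : (d : ℤ) = (m : ℤ) / (a : ℤ) := by rw [hd]; push_cast; rfl
    rw [hdc]
    linear_combination h01
  have hbb : (b : ℤ) - b' = 0 := by
    apply Int.eq_zero_of_abs_lt_dvd hdvd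
    rw [abs_lt]
    constructor <;> omega
  have : b = b' := by omega
  rw [this]

lemma heckeM_det {Q m : ℕ} {x : (_ : ℕ) × ℕ} (hx : x ∈ heckeIdx m) :
    (heckeM Q m x).det = m := by
  rw [mem_heckeIdx] at hx
  unfold heckeM
  rw [Matrix.det_fin_two_of]
  have := Nat.mul_div_cancel' hx.1.1
  simp
  exact_mod_cast this

/-- Right multiplication by `A` permutes the representatives. -/
lemma hecke_perm {Q m : ℕ} (hm : 1 ≤ m) (hcop : Nat.Coprime m Q) (A : SL2Z) :
    ∃ e : heckeIdx m → heckeIdx m, Function.Bijective e ∧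
      ∀ x, ∃ B : SL2Z, heckeM Q m x.1 * A.1 = B.1 * heckeM Q m (e x).1 := by
  have hex : ∀ x : heckeIdx m, ∃ y : heckeIdx m, ∃ B : SL2Z,
      heckeM Q m x.1 * A.1 = B.1 * heckeM Q m y.1 := by
    intro x
    obtain ⟨y, hy, B, hB⟩ := hecke_reduce hm hcop (heckeM Q m x.1 * A.1)
      (by rw [Matrix.det_mul, heckeM_det x.2, A.2, mul_one])
    exact ⟨⟨y, hy⟩, B, hB⟩
  choose e he using hex
  refine ⟨e, ?_, he⟩
  rw [← Finite.injective_iff_bijective]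
  intro x x' hxx
  obtain ⟨B, hB⟩ := he x
  obtain ⟨B', hB'⟩ := he x'
  rw [← hxx] at hB'
  apply Subtype.ext
  apply hecke_unique hcop x.2 x'.2 (B * B'⁻¹)
  have hBB : (B'⁻¹).1 * B'.1 = 1 := by
    have := congrArg Subtype.val (inv_mul_cancel B')
    simpa only [Matrix.SpecialLinearGroup.coe_mul, Matrix.SpecialLinearGroup.coe_one] using this
  have hAA : A.1 * (A⁻¹).1 = 1 := by
    have := congrArg Subtype.val (mul_inv_cancel A)
    simpa only [Matrix.SpecialLinearGroup.coe_mul, Matrix.SpecialLinearGroup.coe_one] using this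
  have key : heckeM Q m x.1 * A.1 = (B * B'⁻¹).1 * heckeM Q m x'.1 * A.1 := by
    rw [Matrix.mul_assoc, hB', Matrix.SpecialLinearGroup.coe_mul, Matrix.mul_assoc,
      ← Matrix.mul_assoc (B'⁻¹).1, hBB, Matrix.one_mul, hB]
  have := congrArg (· * (A⁻¹).1) key
  simp only [Matrix.mul_assoc, hAA, Matrix.mul_one] at this
  rw [this]

lemma congrCond_iff {Q m : ℕ} {A Am : SL2Z} : CongrCond Q m A Am ↔
    (Int.castRingHom (ZMod Q)).mapMatrix Am.1 * !![(1 : ZMod Q), 0; 0, (m : ZMod Q)]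
      = !![(1 : ZMod Q), 0; 0, (m : ZMod Q)] * (Int.castRingHom (ZMod Q)).mapMatrix A.1 := by
  have hδ : !![(1 : ZMod Q), 0; 0, (m : ZMod Q)]
      = (Int.castRingHom (ZMod Q)).mapMatrix !![(1 : ℤ), 0; 0, (m : ℤ)] := by
    ext i j; fin_cases i <;> fin_cases j <;> simp
  rw [hδ, ← map_mul, ← map_mul, ← Matrix.ext_iff]
  unfold CongrCond
  refine forall_congr' fun i => forall_congr' fun j => ?_
  rw [← ZMod.intCast_eq_intCast_iff]
  simp [RingHom.mapMatrix_apply]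

lemma unit_matrix_cancel {Q m : ℕ} (hcop : Nat.Coprime m Q) {X Y M : Matrix (Fin 2) (Fin 2) (ZMod Q)}
    (hM : M.det = (m : ZMod Q)) (h : X * M = Y * M) : X = Y := by
  have hu : IsUnit M := by
    rw [Matrix.isUnit_iff_isUnit_det, hM]
    exact (ZMod.isUnit_iff_coprime m Q).2 hcop
  exact hu.mul_right_cancel h

lemma sigma_hecke {Q m : ℕ} {x : (_ : ℕ) × ℕ} (hx : x ∈ heckeIdx m) {s : SL2Z}
    (hs : SigmaCond Q x.1 s) :
    (Int.castRingHom (ZMod Q)).mapMatrix s.1 * (Int.castRingHom (ZMod Q)).mapMatrix (heckeM Q m x)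
      = !![(1 : ZMod Q), 0; 0, (m : ZMod Q)] := by
  obtain ⟨a', h1, h00, h01, h10, h11⟩ := hs
  rw [mem_heckeIdx] at hx
  have hmd := Nat.mul_div_cancel' hx.1.1
  rw [← ZMod.intCast_eq_intCast_iff] at h1 h00 h01 h10 h11
  have hmd' : ((x.1 : ℕ) : ZMod Q) * ((m / x.1 : ℕ) : ZMod Q) = m := by exact_mod_cast congrArg (Nat.cast : ℕ → ZMod Q) hmd
  push_cast at h1 h01 h10 h11
  ext i j
  fin_cases i <;> fin_cases j <;>
    simp [heckeM, Matrix.mul_apply, Fin.sum_univ_two, h00, h01, h10, h11]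
  · rw [mul_comm]; exact h1
  · rw [← hmd']
    norm_cast

lemma exists_congrCond {Q m : ℕ} (hm : 1 ≤ m) (hcop : Nat.Coprime m Q)
    (σ : ℕ → SL2Z) (hσ : ∀ a : ℕ, a ∣ m → SigmaCond Q a (σ a)) (A : SL2Z) :
    ∃ Am, CongrCond Q m A Am := by
  obtain ⟨y, hy, B, hB⟩ := hecke_reduce hm hcop (!![(1 : ℤ), 0; 0, (m : ℤ)] * A.1)
      (by rw [Matrix.det_mul, A.2, Matrix.det_fin_two_of]; simp)
  refine ⟨B * (σ y.1)⁻¹, ?_⟩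
  have hδ : !![(1 : ZMod Q), 0; 0, (m : ZMod Q)]
      = (Int.castRingHom (ZMod Q)).mapMatrix !![(1 : ℤ), 0; 0, (m : ℤ)] := by
    ext i j; fin_cases i <;> fin_cases j <;> simp
  have hs := sigma_hecke hy (hσ y.1 (mem_heckeIdx.1 hy).1.1)
  rw [congrCond_iff]
  have hinv : ((σ y.1)⁻¹).1 * (σ y.1).1 = 1 := by
    have := congrArg Subtype.val (inv_mul_cancel (σ y.1))
    simpa only [Matrix.SpecialLinearGroup.coe_mul, Matrix.SpecialLinearGroup.coe_one] using this
  have hB2 := congrArg (Int.castRingHom (ZMod Q)).mapMatrix hB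
  rw [map_mul, ← hδ] at hB2
  rw [hB2, ← hs, Matrix.SpecialLinearGroup.coe_mul, ← map_mul, ← map_mul, Matrix.mul_assoc,
    ← Matrix.mul_assoc _ _ (heckeM Q m y), hinv, Matrix.one_mul]

/-- The basic congruence relating the two sigma matrices. -/
lemma hecke_congr {Q m : ℕ} (hcop : Nat.Coprime m Q)
    (σ : ℕ → SL2Z) (hσ : ∀ a : ℕ, a ∣ m → SigmaCond Q a (σ a)) {A Am B : SL2Z}
    (hA : CongrCond Q m A Am) {x y : (_ : ℕ) × ℕ} (hx : x ∈ heckeIdx m) (hy : y ∈ heckeIdx m)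
    (h : heckeM Q m x * A.1 = B.1 * heckeM Q m y) :
    (Int.castRingHom (ZMod Q)).mapMatrix (σ x.1 * B).1
      = (Int.castRingHom (ZMod Q)).mapMatrix (Am * σ y.1).1 := by
  have hsx := sigma_hecke hx (hσ x.1 (mem_heckeIdx.1 hx).1.1)
  have hsy := sigma_hecke hy (hσ y.1 (mem_heckeIdx.1 hy).1.1)
  rw [congrCond_iff] at hA
  have h2 := congrArg (Int.castRingHom (ZMod Q)).mapMatrix h
  rw [map_mul, map_mul] at h2
  apply unit_matrix_cancel hcop (M := (Int.castRingHom (ZMod Q)).mapMatrix (heckeM Q m y))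
  · rw [← RingHom.map_det, heckeM_det hy]; simp
  · rw [Matrix.SpecialLinearGroup.coe_mul, Matrix.SpecialLinearGroup.coe_mul, map_mul, map_mul,
      Matrix.mul_assoc, ← h2, ← Matrix.mul_assoc, hsx, ← hA, Matrix.mul_assoc, hsy]

/-! ### Part 3: analytic part -/

section analytic
variable {ι : Type*} [Fintype ι] {S : Matrix ι ι ℤ}

lemma bilinC_smul_left (c : ℂ) (x y : ι → ℂ) :
    bilinC S (fun i => c * x i) y = c * bilinC S x y := by
  unfold bilinC
  simp only [Finset.mul_sum]
  exact Finset.sum_congr rfl fun i _ => Finset.sum_congr rfl fun j _ => by ring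

lemma bilinC_smul_right (c : ℂ) (x y : ι → ℂ) :
    bilinC S x (fun i => c * y i) = c * bilinC S x y := by
  unfold bilinC
  simp only [Finset.mul_sum]
  exact Finset.sum_congr rfl fun i _ => Finset.sum_congr rfl fun j _ => by ring

lemma bilinC_add_left (x x' y : ι → ℂ) :
    bilinC S (fun i => x i + x' i) y = bilinC S x y + bilinC S x' y := by
  unfold bilinC
  simp only [← Finset.sum_add_distrib]
  exact Finset.sum_congr rfl fun i _ => Finset.sum_congr rfl fun j _ => by ring

lemma bilinC_add_right (x y y' : ι → ℂ) :
    bilinC S x (fun i => y i + y' i) = bilinC S x y + bilinC S x y' := by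
  unfold bilinC
  simp only [← Finset.sum_add_distrib]
  exact Finset.sum_congr rfl fun i _ => Finset.sum_congr rfl fun j _ => by ring

lemma bilinC_symm (hS : S.IsSymm) (x y : ι → ℂ) : bilinC S x y = bilinC S y x := by
  unfold bilinC
  rw [Finset.sum_comm]
  refine Finset.sum_congr rfl fun i _ => Finset.sum_congr rfl fun j _ => ?_
  rw [hS.apply i j]
  ring

lemma bilinC_int (x y : ι → ℤ) :
    bilinC S (fun i => (x i : ℂ)) (fun i => (y i : ℂ)) = (bilinZ S x y : ℂ) := by
  unfold bilinC bilinZ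
  push_cast
  rfl

variable {k : ℤ} {t : ℚ} {χ : SL2Z → ℂ} {ν : (ι → ℤ) → (ι → ℤ) → ℂ}
  {f : ℚ × (ι → ℚ) → ℂ} {φ : ℂ → (ι → ℂ) → ℂ}

lemma HasFiniteOrder.ne_zero {c : ℂ} (h : HasFiniteOrder c) : c ≠ 0 := by
  rintro rfl
  obtain ⟨N, hN, h⟩ := h
  rw [zero_pow hN.ne'] at h
  exact zero_ne_one h

/-- Cocycle relation for `ν`. -/
lemma nu_cocycle (hS : S.IsSymm) (hφ : IsJacobiForm S (k : ℚ) t χ ν f φ) {w : ℂ} (hw : 0 < w.im) {u : ι → ℂ}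
    (hne : φ w u ≠ 0) (x y x' y' : ι → ℤ) :
    ν (fun i => x i + x' i) (fun i => y i + y' i)
      = ν x y * ν x' y' * Complex.exp (-(2 * (π : ℂ) * I * t * (bilinZ S x y' : ℂ))) := by
  have e1 := hφ.elliptic (fun i => x i + x' i) (fun i => y i + y' i) w hw u
  have e2 := hφ.elliptic x y w hw (fun i => u i + (x' i : ℂ) * w + (y' i : ℂ))
  have e3 := hφ.elliptic x' y' w hw u
  have harg : (fun i => u i + (((x i + x' i : ℤ)) : ℂ) * w + ((y i + y' i : ℤ) : ℂ))
      = (fun i => (u i + (x' i : ℂ) * w + (y' i : ℂ)) + (x i : ℂ) * w + (y i : ℂ)) := by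
    funext i; push_cast; ring
  rw [harg, e2, e3] at e1
  have hb1 : (bilinZ S (fun i => x i + x' i) (fun i => x i + x' i) : ℂ)
      = bilinZ S x x + 2 * bilinZ S x x' + bilinZ S x' x' := by
    simp only [← bilinC_int]
    push_cast
    rw [bilinC_add_left, bilinC_add_right, bilinC_add_right,
      bilinC_symm hS (fun i => (x' i : ℂ)) (fun i => (x i : ℂ))]
    ring
  have hb2 : bilinC S (fun i => ((x i + x' i : ℤ) : ℂ)) u
      = bilinC S (fun i => (x i : ℂ)) u + bilinC S (fun i => (x' i : ℂ)) u := by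
    push_cast
    rw [bilinC_add_left]
  have hb3 : bilinC S (fun i => (x i : ℂ)) (fun i => u i + (x' i : ℂ) * w + (y' i : ℂ))
      = bilinC S (fun i => (x i : ℂ)) u + w * bilinZ S x x' + bilinZ S x y' := by
    rw [bilinC_add_right, bilinC_add_right, bilinC_int]
    congr 2
    rw [← bilinC_int, ← bilinC_smul_right]
    congr 1
    funext i; ring
  rw [hb1, hb2, hb3] at e1
  set P := bilinC S (fun i => (x i : ℂ)) u
  set P' := bilinC S (fun i => (x' i : ℂ)) u
  set E := Complex.exp (-((π : ℂ) * I * (t : ℂ)) * ((bilinZ S x x + 2 * bilinZ S x x' + bilinZ S x' x') * w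
    + 2 * (P + P'))) with hE
  have hE0 : E ≠ 0 := Complex.exp_ne_zero _
  have hexp : Complex.exp (-((π : ℂ) * I * (t : ℂ)) * ((bilinZ S x x : ℂ) * w
        + 2 * (P + w * bilinZ S x x' + bilinZ S x y')))
      * Complex.exp (-((π : ℂ) * I * (t : ℂ)) * ((bilinZ S x' x' : ℂ) * w + 2 * P'))
      = E * Complex.exp (-(2 * (π : ℂ) * I * t * (bilinZ S x y' : ℂ))) := by
    rw [hE, ← Complex.exp_add, ← Complex.exp_add]
    congr 1; ring
  apply mul_right_cancel₀ (mul_ne_zero hE0 hne)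
  linear_combination -e1 + ν x y * ν x' y' * φ w u * hexp

lemma nu_exp_one (hS : S.IsSymm) (hν : ∀ x y, HasFiniteOrder (ν x y))
    (hφ : IsJacobiForm S (k : ℚ) t χ ν f φ) {w : ℂ} (hw : 0 < w.im) {u : ι → ℂ}
    (hne : φ w u ≠ 0) (x y : ι → ℤ) :
    Complex.exp (-(2 * (π : ℂ) * I * t * (bilinZ S x y : ℂ))) = 1 := by
  have h1 := nu_cocycle hS hφ hw hne x (fun _ => 0) (fun _ => 0) y
  have h2 := nu_cocycle hS hφ hw hne (fun _ => 0) y x (fun _ => 0)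
  have hz : bilinZ S (fun _ => 0) (fun _ => 0) = 0 := by simp [bilinZ]
  simp only [add_zero, zero_add] at h1 h2
  rw [hz] at h2
  simp only [Int.cast_zero, mul_zero, neg_zero, Complex.exp_zero, mul_one] at h2
  rw [h2] at h1
  apply mul_left_cancel₀ (mul_ne_zero (hν x (fun _ => 0)).ne_zero (hν (fun _ => 0) y).ne_zero)
  linear_combination -h1

lemma nu_add (hS : S.IsSymm) (hν : ∀ x y, HasFiniteOrder (ν x y))
    (hφ : IsJacobiForm S (k : ℚ) t χ ν f φ) {w : ℂ} (hw : 0 < w.im) {u : ι → ℂ}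
    (hne : φ w u ≠ 0) (x y x' y' : ι → ℤ) :
    ν (fun i => x i + x' i) (fun i => y i + y' i) = ν x y * ν x' y' := by
  rw [nu_cocycle hS hφ hw hne, nu_exp_one hS hν hφ hw hne, mul_one]

lemma nu_neg (hχ : ∀ A, χ A ≠ 0)
    (hφ : IsJacobiForm S (k : ℚ) t χ ν f φ) {w : ℂ} (hw : 0 < w.im) {u : ι → ℂ}
    (hne : φ w u ≠ 0) (x y : ι → ℤ) :
    ν (fun i => - x i) (fun i => - y i) = ν x y := by
  obtain ⟨c, hc0, hc⟩ : ∃ c : ℂ, c ≠ 0 ∧ ∀ v : ι → ℂ, φ w (fun i => - v i) = c * φ w v := by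
    refine ⟨χ (-1) * (-1 : ℂ) ^ (((k : ℚ)) : ℂ), mul_ne_zero (hχ _) ?_, ?_⟩
    · rw [Rat.cast_intCast, Complex.cpow_intCast]
      exact zpow_ne_zero _ (by norm_num)
    · intro v
      have := hφ.modular (-1) w hw v
      have e00 : ((-1 : SL2Z)).1 0 0 = -1 := by simp
      have e01 : ((-1 : SL2Z)).1 0 1 = 0 := by simp
      have e10 : ((-1 : SL2Z)).1 1 0 = 0 := by simp
      have e11 : ((-1 : SL2Z)).1 1 1 = -1 := by simp
      rw [e00, e01, e10, e11] at this
      simp only [Int.cast_neg, Int.cast_one, Int.cast_zero, zero_mul, zero_add, add_zero, mul_zero,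
        zero_div, neg_zero, Complex.exp_zero, mul_one, neg_mul, one_mul, div_neg, neg_neg, div_one] at this
      exact this
  have e1 := hφ.elliptic x y w hw u
  have e2 := hφ.elliptic (fun i => - x i) (fun i => - y i) w hw (fun i => - u i)
  have harg : (fun i => - u i + ((- x i : ℤ) : ℂ) * w + ((- y i : ℤ) : ℂ))
      = fun i => - (u i + (x i : ℂ) * w + (y i : ℂ)) := by
    funext i; push_cast; ring
  have hb1 : bilinZ S (fun i => - x i) (fun i => - x i) = bilinZ S x x := by
    unfold bilinZ; simp
  have hb2 : bilinC S (fun i => ((- x i : ℤ) : ℂ)) (fun i => - u i)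
      = bilinC S (fun i => (x i : ℂ)) u := by
    unfold bilinC; simp
  rw [harg, hc, hc, hb1, hb2, e1] at e2
  have hE := Complex.exp_ne_zero (-((π : ℂ) * I * (t : ℂ))
            * ((bilinZ S x x : ℂ) * w + 2 * bilinC S (fun i => (x i : ℂ)) u))
  apply mul_right_cancel₀ (mul_ne_zero (mul_ne_zero hE hc0) hne)
  linear_combination -e2

lemma nu_T (hχ : ∀ A, χ A ≠ 0) (hν1 : ∀ x y, ν x y = 1)
    (hφ : IsJacobiForm S (k : ℚ) t χ ν f φ) {w : ℂ} (hw : 0 < w.im) {u : ι → ℂ}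
    (hne : φ w u ≠ 0) (x : ι → ℤ) :
    Complex.exp (-((π : ℂ) * I * t * (bilinZ S x x : ℂ))) = 1 := by
  have hc : ∀ v : ι → ℂ, φ (w + 1) v = χ ModularGroup.T * φ w v := by
    intro v
    have := hφ.modular ModularGroup.T w hw v
    rw [show (ModularGroup.T).1 0 0 = 1 by simp [ModularGroup.T],
      show (ModularGroup.T).1 0 1 = 1 by simp [ModularGroup.T],
      show (ModularGroup.T).1 1 0 = 0 by simp [ModularGroup.T],
      show (ModularGroup.T).1 1 1 = 1 by simp [ModularGroup.T]] at this
    simpa using this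
  have hw1 : 0 < (w + 1).im := by simpa using hw
  have e1 := hφ.elliptic x (fun _ => 0) (w + 1) hw1 u
  have e2 := hφ.elliptic x x w hw u
  have harg : (fun i => u i + (x i : ℂ) * (w + 1) + ((0 : ℤ) : ℂ))
      = fun i => u i + (x i : ℂ) * w + (x i : ℂ) := by
    funext i; push_cast; ring
  rw [harg, hc, hc, e2, hν1, hν1] at e1
  have hE := Complex.exp_ne_zero (-((π : ℂ) * I * (t : ℂ))
            * ((bilinZ S x x : ℂ) * w + 2 * bilinC S (fun i => (x i : ℂ)) u))
  have hexp : Complex.exp (-((π : ℂ) * I * (t : ℂ))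
            * ((bilinZ S x x : ℂ) * (w + 1) + 2 * bilinC S (fun i => (x i : ℂ)) u))
      = Complex.exp (-((π : ℂ) * I * (t : ℂ))
            * ((bilinZ S x x : ℂ) * w + 2 * bilinC S (fun i => (x i : ℂ)) u))
        * Complex.exp (-((π : ℂ) * I * t * (bilinZ S x x : ℂ))) := by
    rw [← Complex.exp_add]; congr 1; ring
  rw [hexp] at e1
  apply mul_left_cancel₀ (mul_ne_zero (mul_ne_zero hE (hχ ModularGroup.T)) hne)
  linear_combination -e1

lemma nu_final (hS : S.IsSymm) (hν : ∀ x y, HasFiniteOrder (ν x y)) (hχ : ∀ A, χ A ≠ 0)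
    {Q : ℕ} (hν1 : Odd Q → ∀ x y, ν x y = 1)
    (hφ : IsJacobiForm S (k : ℚ) t χ ν f φ) {w : ℂ} (hw : 0 < w.im) {u : ι → ℂ}
    (hne : φ w u ≠ 0) (x y : ι → ℤ) (a b d : ℕ) (ha : Nat.Coprime a Q) (hd : Nat.Coprime d Q) :
    ν (fun i => (d : ℤ) * x i) (fun i => (a : ℤ) * y i - (b : ℤ) * (Q : ℤ) * x i)
      * Complex.exp (-((π : ℂ) * I * t * ((d * b * Q : ℕ) : ℂ) * (bilinZ S x x : ℂ))) = ν x y := by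
  rcases Nat.even_or_odd Q with hQ | hQ
  · obtain ⟨q, hq⟩ := hQ
    have h2Q : 2 ∣ Q := ⟨q, by omega⟩
    have hodd : ∀ n : ℕ, Nat.Coprime n Q → Odd n := by
      intro n hn
      rw [← Nat.not_even_iff_odd, even_iff_two_dvd]
      intro h2
      have := Nat.dvd_gcd h2 h2Q
      rw [hn] at this
      omega
    obtain ⟨a1, ha1⟩ := hodd a ha
    obtain ⟨d1, hd1⟩ := hodd d hd
    have hexp : Complex.exp (-((π : ℂ) * I * t * ((d * b * Q : ℕ) : ℂ) * (bilinZ S x x : ℂ))) = 1 := by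
      have : -((π : ℂ) * I * t * ((d * b * Q : ℕ) : ℂ) * (bilinZ S x x : ℂ))
         = ((d * b * q : ℕ) : ℂ) * (-(2 * (π : ℂ) * I * t * (bilinZ S x x : ℂ))) := by
        rw [hq]; push_cast; ring
      rw [this, Complex.exp_nat_mul, nu_exp_one hS hν hφ hw hne, one_pow]
    rw [hexp, mul_one]
    have hsq : ∀ v v' : ι → ℤ, ν v v' * ν v v' = 1 := by
      intro v v'
      have h1 := nu_add hS hν hφ hw hne v v' (fun i => - v i) (fun i => - v' i)
      rw [nu_neg hχ hφ hw hne] at h1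
      have h2 := nu_add hS hν hφ hw hne (fun _ => 0) (fun _ => 0) (fun _ => 0) (fun _ => 0)
      simp only [add_zero, add_neg_cancel] at h1 h2
      have h3 : ν (fun _ => 0) (fun _ => 0) = 1 := by
        apply mul_left_cancel₀ (hν (fun _ => 0) (fun _ => 0)).ne_zero
        rw [← h2, mul_one]
      rw [← h1, h3]
    have e1 := nu_add hS hν hφ hw hne x y
      (fun i => (d1 * x i) + (d1 * x i)) (fun i => (a1 * y i - b * q * x i) + (a1 * y i - b * q * x i))
    have e2 := nu_add hS hν hφ hw hne (fun i => d1 * x i) (fun i => a1 * y i - b * q * x i)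
      (fun i => d1 * x i) (fun i => a1 * y i - b * q * x i)
    rw [hsq] at e2
    rw [e2, mul_one] at e1
    rw [← e1]
    congr 1
    · funext i; rw [hd1]; push_cast; ring
    · funext i; rw [ha1, hq]; push_cast; ring
  · have h1 := nu_T hχ (hν1 hQ) hφ hw hne x
    rw [hν1 hQ, hν1 hQ, one_mul]
    have : -((π : ℂ) * I * t * ((d * b * Q : ℕ) : ℂ) * (bilinZ S x x : ℂ))
         = ((d * b * Q : ℕ) : ℂ) * (-((π : ℂ) * I * t * (bilinZ S x x : ℂ))) := by ring
    rw [this, Complex.exp_nat_mul, h1, one_pow]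

end analytic

/-! ### Part 4: assembly -/

section assembly
variable {ι : Type*} [Fintype ι] {S : Matrix ι ι ℤ}
  {k : ℤ} {t : ℚ} {χ : SL2Z → ℂ} {ν : (ι → ℤ) → (ι → ℤ) → ℂ}
  {f : ℚ × (ι → ℚ) → ℂ} {φ : ℂ → (ι → ℂ) → ℂ}

lemma heckeSum_eq (vη : SL2Z → ℂ) (σ : ℕ → SL2Z) (k : ℤ) (Q m : ℕ) (τ : ℂ) (z : ι → ℂ) :
    heckeSum φ vη σ k Q m τ z = ∑ x ∈ heckeIdx m, (x.1 : ℂ) ^ k * vη (σ x.1)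
      * φ (((x.1 : ℂ) * τ + (x.2 : ℂ) * (Q : ℂ)) / ((m / x.1 : ℕ) : ℂ))
        (fun i => (x.1 : ℂ) * z i) := by
  unfold heckeSum heckeIdx
  rw [Finset.sum_sigma]

lemma hecke_im_pos {a d : ℕ} (b Q : ℕ) (ha : 0 < a) (hd : 0 < d) {τ : ℂ} (hτ : 0 < τ.im) :
    0 < (((a : ℂ) * τ + (b : ℂ) * (Q : ℂ)) / (d : ℂ)).im := by
  rw [Complex.div_natCast_im]
  have : ((a : ℂ) * τ + (b : ℂ) * (Q : ℂ)).im = a * τ.im := by simp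
  rw [this]
  positivity

lemma term_holo (hφ : IsJacobiForm S (k : ℚ) t χ ν f φ) {a d : ℕ} (b Q : ℕ)
    (ha : 0 < a) (hd : 0 < d) :
    DifferentiableOn ℂ (fun p : ℂ × (ι → ℂ) =>
      φ (((a : ℂ) * p.1 + (b : ℂ) * (Q : ℂ)) / (d : ℂ)) (fun i => (a : ℂ) * p.2 i))
      {p | 0 < p.1.im} := by
  have h := hφ.holo
  have hg : Differentiable ℂ (fun p : ℂ × (ι → ℂ) =>
      ((((a : ℂ) * p.1 + (b : ℂ) * (Q : ℂ)) / (d : ℂ), fun i => (a : ℂ) * p.2 i) :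
        ℂ × (ι → ℂ))) := by
    fun_prop
  exact h.comp hg.differentiableOn (fun p hp => hecke_im_pos b Q ha hd hp)

lemma term_modular (hφ : IsJacobiForm S (k : ℚ) t χ ν f φ) {a b d a' b' d' Q m : ℕ}
    (ha : 0 < a) (hd : 0 < d) (ha' : 0 < a') (hd' : 0 < d')
    (had : a * d = m) (had' : a' * d' = m) (A B : SL2Z)
    (h00 : (a : ℤ) * A.1 0 0 + b * Q * A.1 1 0 = B.1 0 0 * a')
    (h01 : (a : ℤ) * A.1 0 1 + b * Q * A.1 1 1 = B.1 0 0 * (b' * Q) + B.1 0 1 * d')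
    (h10 : (d : ℤ) * A.1 1 0 = B.1 1 0 * a')
    (h11 : (d : ℤ) * A.1 1 1 = B.1 1 0 * (b' * Q) + B.1 1 1 * d')
    {τ : ℂ} (hτ : 0 < τ.im) (z : ι → ℂ) :
    (a : ℂ) ^ k * φ (((a : ℂ) * (((A.1 0 0 : ℂ) * τ + (A.1 0 1 : ℂ))
        / ((A.1 1 0 : ℂ) * τ + (A.1 1 1 : ℂ))) + (b : ℂ) * (Q : ℂ)) / (d : ℂ))
        (fun i => (a : ℂ) * (z i / ((A.1 1 0 : ℂ) * τ + (A.1 1 1 : ℂ))))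
      = χ B * (((A.1 1 0 : ℂ) * τ + (A.1 1 1 : ℂ)) ^ k
        * Complex.exp ((π : ℂ) * I * (((m : ℚ) * t : ℚ) : ℂ) * (A.1 1 0 : ℂ) * bilinC S z z
            / ((A.1 1 0 : ℂ) * τ + (A.1 1 1 : ℂ)))
        * ((a' : ℂ) ^ k * φ (((a' : ℂ) * τ + (b' : ℂ) * (Q : ℂ)) / (d' : ℂ))
          (fun i => (a' : ℂ) * z i))) := by
  have hj := sl2_denom_ne A hτ
  have hw := hecke_im_pos b' Q ha' hd' hτ
  have hmod := hφ.modular B _ hw (fun i => (a' : ℂ) * z i)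
  have c00 := congrArg (Int.cast : ℤ → ℂ) h00
  have c01 := congrArg (Int.cast : ℤ → ℂ) h01
  have c10 := congrArg (Int.cast : ℤ → ℂ) h10
  have c11 := congrArg (Int.cast : ℤ → ℂ) h11
  have cad := congrArg (Nat.cast : ℕ → ℂ) had
  have cad' := congrArg (Nat.cast : ℕ → ℂ) had'
  push_cast at c00 c01 c10 c11 cad cad'
  have ha0 : (a : ℂ) ≠ 0 := by exact_mod_cast ha.ne'
  have hd0 : (d : ℂ) ≠ 0 := by exact_mod_cast hd.ne'
  have ha0' : (a' : ℂ) ≠ 0 := by exact_mod_cast ha'.ne'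
  have hd0' : (d' : ℂ) ≠ 0 := by exact_mod_cast hd'.ne'
  set j : ℂ := (A.1 1 0 : ℂ) * τ + (A.1 1 1 : ℂ) with hjdef
  set w : ℂ := ((a' : ℂ) * τ + (b' : ℂ) * (Q : ℂ)) / (d' : ℂ) with hwdef
  have hwd : w * d' = (a' : ℂ) * τ + (b' : ℂ) * (Q : ℂ) := by
    rw [hwdef, div_mul_cancel₀ _ hd0']
  have hden : (B.1 1 0 : ℂ) * w + (B.1 1 1 : ℂ) = d * j / d' := by
    rw [eq_div_iff hd0', hjdef]
    linear_combination (B.1 1 0 : ℂ) * hwd - τ * c10 - c11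
  have hnum : (B.1 0 0 : ℂ) * w + (B.1 0 1 : ℂ)
      = (a * ((A.1 0 0 : ℂ) * τ + (A.1 0 1 : ℂ)) + b * Q * j) / d' := by
    rw [eq_div_iff hd0', hjdef]
    linear_combination (B.1 0 0 : ℂ) * hwd - τ * c00 - c01
  have harg : ((B.1 0 0 : ℂ) * w + (B.1 0 1 : ℂ)) / ((B.1 1 0 : ℂ) * w + (B.1 1 1 : ℂ))
      = ((a : ℂ) * (((A.1 0 0 : ℂ) * τ + (A.1 0 1 : ℂ)) / j) + (b : ℂ) * (Q : ℂ)) / (d : ℂ) := by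
    rw [hden, hnum]
    field_simp
  have hz : (fun i => (a' : ℂ) * z i / ((B.1 1 0 : ℂ) * w + (B.1 1 1 : ℂ)))
      = fun i => (a : ℂ) * (z i / j) := by
    funext i
    rw [hden]
    field_simp
    linear_combination z i * cad' - z i * cad
  have hE : (π : ℂ) * I * (t : ℂ) * (B.1 1 0 : ℂ)
        * bilinC S (fun i => (a' : ℂ) * z i) (fun i => (a' : ℂ) * z i) / (d * j / d')
      = (π : ℂ) * I * (((m : ℚ) * t : ℚ) : ℂ) * (A.1 1 0 : ℂ) * bilinC S z z / j := by
    rw [bilinC_smul_left, bilinC_smul_right]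
    push_cast
    rw [div_div_eq_mul_div, div_eq_div_iff (mul_ne_zero hd0 hj) hj]
    have : (B.1 1 0 : ℂ) * a' * (a' * d') = m * (A.1 1 0 : ℂ) * d := by
      rw [cad', ← c10]; ring
    linear_combination (π : ℂ) * I * (t : ℂ) * bilinC S z z * j * this
  have hk : (a : ℂ) ^ k * (d * j / d') ^ k = j ^ k * (a' : ℂ) ^ k := by
    rw [← mul_zpow, ← mul_zpow]
    congr 1
    field_simp
    linear_combination cad - cad'
  rw [harg, hz, hden, hE, Rat.cast_intCast, Complex.cpow_intCast] at hmod
  rw [hmod]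
  linear_combination χ B * Complex.exp ((π : ℂ) * I * (((m : ℚ) * t : ℚ) : ℂ) * (A.1 1 0 : ℂ)
    * bilinC S z z / j) * φ w (fun i => (a' : ℂ) * z i) * hk

lemma term_elliptic (hS : S.IsSymm) (hν : ∀ x y, HasFiniteOrder (ν x y)) (hχ : ∀ A, χ A ≠ 0)
    {Q : ℕ} (hν1 : Odd Q → ∀ x y, ν x y = 1)
    (hφ : IsJacobiForm S (k : ℚ) t χ ν f φ) {a d m : ℕ} (b : ℕ)
    (ha : 0 < a) (hd : 0 < d) (had : a * d = m) (hcop : Nat.Coprime m Q)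
    (x y : ι → ℤ) {τ : ℂ} (hτ : 0 < τ.im) (z : ι → ℂ) :
    φ (((a : ℂ) * τ + (b : ℂ) * (Q : ℂ)) / (d : ℂ))
        (fun i => (a : ℂ) * (z i + (x i : ℂ) * τ + (y i : ℂ)))
      = ν x y * Complex.exp (-((π : ℂ) * I * (((m : ℚ) * t : ℚ) : ℂ))
            * ((bilinZ S x x : ℂ) * τ + 2 * bilinC S (fun i => (x i : ℂ)) z))
        * φ (((a : ℂ) * τ + (b : ℂ) * (Q : ℂ)) / (d : ℂ)) (fun i => (a : ℂ) * z i) := by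
  have hw := hecke_im_pos b Q ha hd hτ
  have cad := congrArg (Nat.cast : ℕ → ℂ) had
  push_cast at cad
  have hd0 : (d : ℂ) ≠ 0 := by exact_mod_cast hd.ne'
  set w : ℂ := ((a : ℂ) * τ + (b : ℂ) * (Q : ℂ)) / (d : ℂ) with hwdef
  have hwd : w * d = (a : ℂ) * τ + (b : ℂ) * (Q : ℂ) := by
    rw [hwdef, div_mul_cancel₀ _ hd0]
  have hell := hφ.elliptic (fun i => (d : ℤ) * x i)
    (fun i => (a : ℤ) * y i - (b : ℤ) * (Q : ℤ) * x i) w hw (fun i => (a : ℂ) * z i)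
  have harg : (fun i => (a : ℂ) * z i + (((d : ℤ) * x i : ℤ) : ℂ) * w
        + (((a : ℤ) * y i - (b : ℤ) * (Q : ℤ) * x i : ℤ) : ℂ))
      = fun i => (a : ℂ) * (z i + (x i : ℂ) * τ + (y i : ℂ)) := by
    funext i
    push_cast
    linear_combination (x i : ℂ) * hwd
  rw [harg] at hell
  rw [hell]
  by_cases hne : φ w (fun i => (a : ℂ) * z i) = 0
  · rw [hne, mul_zero, mul_zero]
  have hfin := nu_final hS hν hχ hν1 hφ hw hne x y a b d
    (Nat.Coprime.coprime_dvd_left ⟨d, had.symm⟩ hcop)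
    (Nat.Coprime.coprime_dvd_left ⟨a, by rw [mul_comm, had]⟩ hcop)
  have hb1 : (bilinZ S (fun i => (d : ℤ) * x i) (fun i => (d : ℤ) * x i) : ℂ)
      = d * d * bilinZ S x x := by
    rw [← bilinC_int, ← bilinC_int]
    push_cast
    rw [bilinC_smul_left, bilinC_smul_right, mul_assoc]
  have hb2 : bilinC S (fun i => (((d : ℤ) * x i : ℤ) : ℂ)) (fun i => (a : ℂ) * z i)
      = m * bilinC S (fun i => (x i : ℂ)) z := by
    push_cast
    rw [bilinC_smul_left, bilinC_smul_right, ← cad]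
    ring
  have hexp : Complex.exp (-((π : ℂ) * I * (t : ℂ)) * ((d : ℂ) * d * bilinZ S x x * w
        + 2 * (m * bilinC S (fun i => (x i : ℂ)) z)))
      = Complex.exp (-((π : ℂ) * I * t * ((d * b * Q : ℕ) : ℂ) * (bilinZ S x x : ℂ)))
        * Complex.exp (-((π : ℂ) * I * (((m : ℚ) * t : ℚ) : ℂ))
            * ((bilinZ S x x : ℂ) * τ + 2 * bilinC S (fun i => (x i : ℂ)) z)) := by
    rw [← Complex.exp_add]
    congr 1
    push_cast
    rw [← cad]
    linear_combination -((π : ℂ) * I * t * d * bilinZ S x x) * hwd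
  rw [hb1, hb2, ← hfin, hexp]
  ring

/-- The scaling of Fourier indices. -/
def scaleEquiv (ι : Type*) (a d : ℚ) (ha : a ≠ 0) (hd : d ≠ 0) :
    (ℚ × (ι → ℚ)) ≃ (ℚ × (ι → ℚ)) where
  toFun p := (p.1 * a / d, fun i => a * p.2 i)
  invFun p := (p.1 * d / a, fun i => p.2 i / a)
  left_inv p := by
    ext
    · simp; field_simp
    · simp; field_simp
  right_inv p := by
    ext
    · simp; field_simp
    · simp; field_simp

/-- Fourier coefficients of one term. -/
def termCoeff (f : ℚ × (ι → ℚ) → ℂ) (a b d Q : ℕ) (p : ℚ × (ι → ℚ)) : ℂ :=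
  f (p.1 * d / a, fun i => p.2 i / a)
    * Complex.exp (2 * (π : ℂ) * I * ((p.1 * d / a : ℚ) : ℂ) * (b * Q / d))

lemma term_expansion (hφ : IsJacobiForm S (k : ℚ) t χ ν f φ) {a d : ℕ} (b Q : ℕ)
    (ha : 0 < a) (hd : 0 < d) {τ : ℂ} (hτ : 0 < τ.im) (z : ι → ℂ) :
    HasSum (fun p : ℚ × (ι → ℚ) => termCoeff f a b d Q p * Complex.exp (2 * (π : ℂ) * I *
          ((p.1 : ℂ) * τ + bilinC S (fun i => (p.2 i : ℂ)) z)))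
      (φ (((a : ℂ) * τ + (b : ℂ) * (Q : ℂ)) / (d : ℂ)) (fun i => (a : ℂ) * z i)) := by
  have ha0 : (a : ℚ) ≠ 0 := by exact_mod_cast ha.ne'
  have hd0 : (d : ℚ) ≠ 0 := by exact_mod_cast hd.ne'
  have ha0' : (a : ℂ) ≠ 0 := by exact_mod_cast ha.ne'
  have hd0' : (d : ℂ) ≠ 0 := by exact_mod_cast hd.ne'
  have h := hφ.expansion _ (hecke_im_pos b Q ha hd hτ) (fun i => (a : ℂ) * z i)
  rw [← (scaleEquiv ι (a : ℚ) (d : ℚ) ha0 hd0).symm.hasSum_iff] at h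
  convert h using 1
  funext p
  simp only [Function.comp, scaleEquiv, Equiv.coe_fn_symm_mk, termCoeff]
  rw [mul_assoc, ← Complex.exp_add]
  congr 2
  rw [bilinC_smul_right, ← bilinC_smul_left]
  have : (fun i => (a : ℂ) * ((p.2 i / (a : ℚ) : ℚ) : ℂ)) = fun i => ((p.2 i : ℚ) : ℂ) := by
    funext i
    push_cast
    field_simp
  rw [this]
  push_cast
  field_simp
  ring

lemma bilinQ_smul_left (c : ℚ) (x y : ι → ℚ) :
    bilinQ S (fun i => c * x i) y = c * bilinQ S x y := by
  unfold bilinQ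
  simp only [Finset.mul_sum]
  exact Finset.sum_congr rfl fun i _ => Finset.sum_congr rfl fun j _ => by ring

lemma bilinQ_smul_right (c : ℚ) (x y : ι → ℚ) :
    bilinQ S x (fun i => c * y i) = c * bilinQ S x y := by
  unfold bilinQ
  simp only [Finset.mul_sum]
  exact Finset.sum_congr rfl fun i _ => Finset.sum_congr rfl fun j _ => by ring

lemma term_support (hφ : IsJacobiForm S (k : ℚ) t χ ν f φ) {a d m : ℕ} (b Q : ℕ)
    (ha : 0 < a) (hd : 0 < d) (had : a * d = m) (p : ℚ × (ι → ℚ))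
    (hp : termCoeff f a b d Q p ≠ 0) :
    0 ≤ p.1 ∧ InHalfDual S p.2 ∧ 0 ≤ 2 * p.1 * ((m : ℚ) * t) - bilinQ S p.2 p.2 := by
  have ha0 : (0 : ℚ) < a := by exact_mod_cast ha
  have hd0 : (0 : ℚ) < d := by exact_mod_cast hd
  have hf : f (p.1 * d / a, fun i => p.2 i / a) ≠ 0 := left_ne_zero_of_mul hp
  obtain ⟨h1, h2, h3⟩ := hφ.support _ hf
  simp only at h1 h2 h3
  set n : ℚ := p.1 * d / a with hn
  set l : ι → ℚ := fun i => p.2 i / a with hl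
  have hp2 : p.2 = fun i => (a : ℚ) * l i := by
    funext i
    rw [hl]
    field_simp
  have hp1 : p.1 = n * a / d := by
    rw [hn]; field_simp
  refine ⟨?_, ?_, ?_⟩
  · rw [hp1]; positivity
  · intro x
    obtain ⟨r, hr⟩ := h2 x
    refine ⟨a * r, ?_⟩
    rw [hp2, bilinQ_smul_left]
    push_cast
    linear_combination (a : ℚ) * hr
  · rw [hp2, bilinQ_smul_left, bilinQ_smul_right, hp1, ← had]
    have : 2 * (n * a / d) * (((a * d : ℕ) : ℚ) * t) - a * (a * bilinQ S l l)
        = a ^ 2 * (2 * n * t - bilinQ S l l) := by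
      push_cast
      field_simp
    rw [this]
    positivity

end assembly
/-- The Hecke operator `T_-^{(Q)}(m)` maps `J_{k,L;t}(v_η^D × ν)` to
`J_{k,L;mt}(v_{η,m}^D × ν)` for `m` coprime to `Q = 24/D` (with `ν` trivial when `Q` is odd),
and the new character `v_{η,m}^D` depends only on `m mod Q`. -/
theorem statement7 {ι : Type*} [Fintype ι] (S : Matrix ι ι ℤ) (hS : IsEvenPosDef S)
    (k : ℤ) (t : ℚ) (ht : 0 < t)
    (D : ℕ) (hD2 : Even D) (hD24 : D ∣ 24) (hDpos : 0 < D)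
    (Q : ℕ) (hQ : Q = 24 / D)
    (vη : SL2Z → ℂ)
    (hvη : ∀ A : SL2Z, ∀ τ : ℂ, 0 < τ.im →
      dedekindEta (((A.1 0 0 : ℂ) * τ + (A.1 0 1 : ℂ))
            / ((A.1 1 0 : ℂ) * τ + (A.1 1 1 : ℂ))) ^ D
        = vη A * ((A.1 1 0 : ℂ) * τ + (A.1 1 1 : ℂ)) ^ (D / 2) * dedekindEta τ ^ D)
    (ν : (ι → ℤ) → (ι → ℤ) → ℂ) (hν : ∀ x y, HasFiniteOrder (ν x y))
    (hνtriv : Odd Q → ∀ x y, ν x y = 1)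
    (f : ℚ × (ι → ℚ) → ℂ) (φ : ℂ → (ι → ℂ) → ℂ)
    (hφ : IsJacobiForm S (k : ℚ) t vη ν f φ)
    (m : ℕ) (hm : 1 ≤ m) (hcop : Nat.Coprime m Q)
    (σ : ℕ → SL2Z) (hσ : ∀ a : ℕ, a ∣ m → SigmaCond Q a (σ a))
    (vηm : SL2Z → ℂ)
    (hvηm : ∀ A Am : SL2Z, CongrCond Q m A Am → vηm A = vη Am) :
    (∃ g : ℚ × (ι → ℚ) → ℂ,
      IsJacobiForm S (k : ℚ) ((m : ℚ) * t) vηm ν g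
        (fun τ z => heckeSum φ vη σ k Q m τ z)) ∧
    (∀ m' : ℕ, 1 ≤ m' → Nat.Coprime m' Q → (m' : ℤ) ≡ (m : ℤ) [ZMOD (Q : ℤ)] →
      ∀ A Am Am' : SL2Z, CongrCond Q m A Am → CongrCond Q m' A Am' → vη Am = vη Am') := by
  classical
  have hvne := fun A => vη_ne_zero hvη A
  have hidx : ∀ x ∈ heckeIdx m, 0 < x.1 ∧ 0 < m / x.1 ∧ x.1 * (m / x.1) = m := by
    intro x hx
    rw [mem_heckeIdx] at hx
    exact ⟨Nat.pos_of_dvd_of_pos hx.1.1 hm, Nat.zero_lt_of_lt hx.2, Nat.mul_div_cancel' hx.1.1⟩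
  refine ⟨⟨fun p => ∑ x ∈ heckeIdx m, (x.1 : ℂ) ^ k * vη (σ x.1)
      * termCoeff f x.1 x.2 (m / x.1) Q p, ?_⟩, ?_⟩
  · refine ⟨?_, ?_, ?_, ?_, ?_⟩
    · simp only [heckeSum_eq]
      refine DifferentiableOn.fun_sum fun x hx => ?_
      obtain ⟨ha, hd, -⟩ := hidx x hx
      exact (term_holo hφ x.2 Q ha hd).const_mul _
    · intro A τ hτ z
      obtain ⟨Am, hAm⟩ := exists_congrCond hm hcop σ hσ A
      rw [hvηm A Am hAm]
      obtain ⟨e, he, hB⟩ := hecke_perm (Q := Q) hm hcop A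
      simp only [heckeSum_eq]
      rw [Rat.cast_intCast, Complex.cpow_intCast, Finset.mul_sum,
        ← Finset.sum_coe_sort (heckeIdx m), ← Finset.sum_coe_sort (heckeIdx m)]
      refine Eq.trans ?_ (he.sum_comp _)
      refine Finset.sum_congr rfl fun x _ => ?_
      obtain ⟨B, hB⟩ := hB x
      have hσB := hecke_congr hcop σ hσ hAm x.2 (e x).2 hB
      have hv := vη_congr hvη hD2 hD24 hDpos Q hQ hσB
      rw [vη_mul hvη, vη_mul hvη] at hv
      obtain ⟨ha, hd, had⟩ := hidx _ x.2
      obtain ⟨ha', hd', had'⟩ := hidx _ (e x).2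
      have g00 := congrFun (congrFun hB 0) 0
      have g01 := congrFun (congrFun hB 0) 1
      have g10 := congrFun (congrFun hB 1) 0
      have g11 := congrFun (congrFun hB 1) 1
      simp only [heckeM, Matrix.mul_apply, Fin.sum_univ_two, Matrix.of_apply, Matrix.cons_val',
        Matrix.cons_val_zero, Matrix.cons_val_one, Matrix.cons_val_fin_one, mul_zero, zero_mul,
        add_zero, zero_add] at g00 g01 g10 g11
      have hterm := term_modular hφ ha hd ha' hd' had had' A B g00 g01 g10 g11 hτ z
      linear_combination vη (σ x.1.1) * hterm + (((A.1 1 0 : ℂ) * τ + (A.1 1 1 : ℂ)) ^ k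
        * Complex.exp ((π : ℂ) * I * (((m : ℚ) * t : ℚ) : ℂ) * (A.1 1 0 : ℂ) * bilinC S z z
            / ((A.1 1 0 : ℂ) * τ + (A.1 1 1 : ℂ)))
        * (((e x).1.1 : ℂ) ^ k * φ ((((e x).1.1 : ℂ) * τ + ((e x).1.2 : ℂ) * (Q : ℂ))
          / ((m / (e x).1.1 : ℕ) : ℂ)) (fun i => ((e x).1.1 : ℂ) * z i))) * hv
    · intro x y τ hτ z
      simp only [heckeSum_eq]
      rw [Finset.mul_sum]
      refine Finset.sum_congr rfl fun c hc => ?_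
      obtain ⟨ha, hd, had⟩ := hidx c hc
      rw [term_elliptic hS.symm hν hvne hνtriv hφ c.2 ha hd had hcop x y hτ z]
      ring
    · intro p hp
      obtain ⟨x, hx, hne⟩ := Finset.exists_ne_zero_of_sum_ne_zero hp
      obtain ⟨ha, hd, had⟩ := hidx x hx
      exact term_support hφ x.2 Q ha hd had p (right_ne_zero_of_mul hne)
    · intro τ hτ z
      simp only [heckeSum_eq, Finset.sum_mul]
      refine hasSum_sum fun x hx => ?_
      obtain ⟨ha, hd, -⟩ := hidx x hx
      have := (term_expansion hφ x.2 Q ha hd hτ z).mul_left ((x.1 : ℂ) ^ k * vη (σ x.1))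
      simpa only [mul_assoc] using this
  · intro m' hm' hcop' hmm A Am Am' h h'
    rw [congrCond_iff] at h h'
    have hz : (m' : ZMod Q) = (m : ZMod Q) := by
      have := (ZMod.intCast_eq_intCast_iff _ _ Q).2 hmm
      simpa using this
    rw [hz, ← h] at h'
    refine vη_congr hvη hD2 hD24 hDpos Q hQ ?_
    exact unit_matrix_cancel hcop (by rw [Matrix.det_fin_two_of]; simp) h'.symm
end
end

section
/- Let L be an even positive definite lattice of rank n, k ∈ ℤ, t ∈ ℚ with t > 0, D an even divisor of 24, Q = 24/D, and let φ ∈ J_{k,L;t}(v_η^D × ν) be a holomorphic Jacobi form (ν trivial if Q is odd). Fix μ ∈ (ℤ/Qℤ)^*, and for each a ≥ 1 coprime to Q fix σ_a ∈ SL₂(ℤ) with σ_a ≡ (a^{−1},0;0,a) mod Q. Then the series Σ_{m ≥ 1, m ≡ μ mod Q} m^{−1} Σ_{ad=m, a>0} Σ_{b mod d} a^k · v_η^D(σ_a) · φ((aτ+bQ)/d, a𝔷) · exp(2πi(m/Q)ω) converges absolutely and locally uniformly on the tube domain H(L(Qt)) := {(τ,𝔷,ω) ∈ ℍ × ℂⁿ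 × ℍ : 2 Im(τ)Im(ω) − Qt·(Im 𝔷, Im 𝔷) > 0}, and hence defines a holomorphic function on H(L(Qt)). -/
open Complex Matrix
open scoped Real BigOperators Classical

noncomputable section

lemma aux_weier {E : Type*} [NormedAddCommGroup E] [NormedSpace ℂ E] (F : ℕ → E → ℂ) (U : Set E)
    (hF : ∀ m, DifferentiableOn ℂ (F m) U)
    (hb : ∀ p ∈ U, ∃ r > 0, ∃ u : ℕ → ℝ, Summable u ∧ Metric.ball p r ⊆ U ∧
      ∀ m, ∀ q ∈ Metric.ball p r, ‖F m q‖ ≤ u m) :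
    ∃ G : E → ℂ, DifferentiableOn ℂ G U ∧
      TendstoLocallyUniformlyOn (fun (s : Finset ℕ) (p : E) => ∑ m ∈ s, F m p) G Filter.atTop U ∧
      ∀ p ∈ U, Summable (fun m : ℕ => ‖F m p‖) ∧ HasSum (fun m : ℕ => F m p) (G p) := by
  have hs : ∀ p ∈ U, Summable (fun m : ℕ => ‖F m p‖) := by
    intro p hp
    obtain ⟨r, hr, u, hu, -, h⟩ := hb p hp
    exact Summable.of_nonneg_of_le (fun _ => norm_nonneg _)
      (fun m => h m p (Metric.mem_ball_self hr)) hu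
  refine ⟨fun p => ∑' m, F m p, ?_, ?_, fun p hp => ⟨hs p hp, (hs p hp).of_norm.hasSum⟩⟩
  · intro p hp
    obtain ⟨r, hr, u, hu, hsub, h⟩ := hb p hp
    apply DifferentiableAt.differentiableWithinAt
    have hr2 : 0 < r / 2 := by positivity
    have hsumm : Summable (fun m : ℕ => (2 * u m + (1 / 2 : ℝ) ^ m) / (r / 2)) :=
      ((hu.mul_left 2).add (summable_geometric_of_lt_one (by norm_num) (by norm_num))).div_const _
    have hx : ∀ q ∈ Metric.ball p (r / 2), Metric.ball q (r / 2) ⊆ Metric.ball p r := by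
      intro q hq y hy
      rw [Metric.mem_ball] at *
      linarith [dist_triangle y q p]
    have hpb : p ∈ Metric.ball p (r / 2) := Metric.mem_ball_self hr2
    refine (hasFDerivAt_tsum_of_isPreconnected (f := F) (f' := fun m q => fderiv ℂ (F m) q)
      hsumm Metric.isOpen_ball (convex_ball p (r / 2)).isPreconnected ?_ ?_ hpb
      (hs p hp).of_norm hpb).differentiableAt
    · intro m q hq
      have hq' : q ∈ Metric.ball p r := Metric.ball_subset_ball (by linarith) hq
      exact (((hF m).mono hsub).differentiableAt (Metric.isOpen_ball.mem_nhds hq')).hasFDerivAt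
    · intro m q hq
      have hq' : q ∈ Metric.ball p r := Metric.ball_subset_ball (by linarith) hq
      refine Complex.norm_fderiv_le_div_of_mapsTo_ball
        (((hF m).mono hsub).mono (hx q hq)) ?_ hr2
      intro y hy
      have h1 := h m y (hx q hq hy)
      have h2 := h m q hq'
      rw [Metric.mem_closedBall, dist_eq_norm]
      have : (0 : ℝ) < (1 / 2 : ℝ) ^ m := by positivity
      linarith [norm_sub_le (F m y) (F m q)]
  · intro V hV p hp
    obtain ⟨r, hr, u, hu, hsub, h⟩ := hb p hp
    have := tendstoUniformlyOn_tsum hu h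
    exact ⟨Metric.ball p r, mem_nhdsWithin_of_mem_nhds (Metric.ball_mem_nhds p hr), this V hV⟩

lemma aux_eta_ne (τ : ℂ) (h : 0 < τ.im) : dedekindEta τ ≠ 0 := by
  have h1 := ModularForm.eta_tprod_ne_zero (z := τ) h
  simp_rw [ModularForm.eta_q_eq_cexp] at h1
  exact mul_ne_zero (Complex.exp_ne_zero _) h1

lemma aux_smul_coe (A : SL2Z) (τ : UpperHalfPlane) :
    ((A • τ : UpperHalfPlane) : ℂ) = ((A.1 0 0 : ℂ) * τ + (A.1 0 1 : ℂ))
            / ((A.1 1 0 : ℂ) * τ + (A.1 1 1 : ℂ)) := by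
  rw [UpperHalfPlane.coe_specialLinearGroup_apply]
  simp

lemma aux_smul_im (A : SL2Z) (τ : UpperHalfPlane) :
    (A • τ : UpperHalfPlane).im = τ.im / ‖(A.1 1 0 : ℂ) * τ + (A.1 1 1 : ℂ)‖ ^ 2 := by
  rw [ModularGroup.im_smul_eq_div_normSq, Complex.normSq_eq_norm_sq, ModularGroup.denom_apply]

lemma aux_den_ne (A : SL2Z) (τ : UpperHalfPlane) :
    (A.1 1 0 : ℂ) * τ + (A.1 1 1 : ℂ) ≠ 0 := by
  have := UpperHalfPlane.denom_ne_zero (A : GL (Fin 2) ℝ) τ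
  rwa [ModularGroup.denom_apply] at this

lemma aux_char (D : ℕ) (hD2 : Even D) (vη : SL2Z → ℂ)
    (hvη : ∀ A : SL2Z, ∀ τ : ℂ, 0 < τ.im →
      dedekindEta (((A.1 0 0 : ℂ) * τ + (A.1 0 1 : ℂ))
            / ((A.1 1 0 : ℂ) * τ + (A.1 1 1 : ℂ))) ^ D
        = vη A * ((A.1 1 0 : ℂ) * τ + (A.1 1 1 : ℂ)) ^ (D / 2) * dedekindEta τ ^ D) (A : SL2Z) :
    ‖vη A‖ = 1 := by
  obtain ⟨e, he⟩ := hD2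
  have he2 : D / 2 = e := by omega
  set F : UpperHalfPlane → ℝ := fun τ => ‖dedekindEta τ‖ ^ (2 * D) * τ.im ^ e with hF
  have hFpos : ∀ τ, 0 < F τ := fun τ => by
    have := norm_pos_iff.2 (aux_eta_ne τ τ.im_pos)
    have := τ.im_pos
    positivity
  have key : ∀ (A : SL2Z) (τ : UpperHalfPlane), F (A • τ) = ‖vη A‖ ^ 2 * F τ := by
    intro A τ
    have h1 := congrArg norm (hvη A τ τ.im_pos)
    rw [← aux_smul_coe, he2] at h1
    simp only [norm_mul, norm_pow] at h1
    have hj := norm_pos_iff.2 (aux_den_ne A τ)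
    simp only [hF]
    rw [mul_comm 2 D, pow_mul, h1, aux_smul_im, div_pow, ← pow_mul _ 2 e]
    have hj2 : ‖(A.1 1 0 : ℂ) * τ + (A.1 1 1 : ℂ)‖ ^ (2 * e) ≠ 0 := by positivity
    field_simp
    ring
  have hmem : A ∈ Subgroup.closure {ModularGroup.S, ModularGroup.T} := by
    simp [SpecialLinearGroup.SL2Z_generators]
  have hinv : ∀ (A : SL2Z), ‖vη A‖ = 1 ↔ ∀ τ, F (A • τ) = F τ := by
    intro A
    constructor
    · intro h τ
      rw [key, h]; ring
    · intro h
      have h2 := key A UpperHalfPlane.I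
      rw [h] at h2
      have h3 : ‖vη A‖ ^ 2 = 1 := by
        have := hFpos UpperHalfPlane.I
        field_simp at h2
        linarith
      exact (pow_eq_one_iff_of_nonneg (norm_nonneg _) two_ne_zero).1 h3
  have hex : ∀ (A : SL2Z), (∃ τ, F (A • τ) = F τ) → ‖vη A‖ = 1 := by
    rintro A ⟨τ, h⟩
    rw [key] at h
    have h3 : ‖vη A‖ ^ 2 = 1 := by
      have := hFpos τ
      field_simp at h
      linarith
    exact (pow_eq_one_iff_of_nonneg (norm_nonneg _) two_ne_zero).1 h3
  induction hmem using Subgroup.closure_induction with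
  | mem x hx =>
    rcases hx with rfl | rfl
    · apply hex
      refine ⟨UpperHalfPlane.I, ?_⟩
      congr 1
      ext
      rw [aux_smul_coe]
      simp [ModularGroup.S]
    · apply hex
      refine ⟨UpperHalfPlane.I, ?_⟩
      have h1 : ((ModularGroup.T • UpperHalfPlane.I : UpperHalfPlane) : ℂ) = Complex.I + 1 := by
        rw [aux_smul_coe]
        simp [ModularGroup.T]
      have h2 : (ModularGroup.T • UpperHalfPlane.I : UpperHalfPlane).im = 1 := by
        rw [← UpperHalfPlane.coe_im, h1]; simp
      have h3 : ‖dedekindEta (Complex.I + 1)‖ = ‖dedekindEta Complex.I‖ := by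
        unfold dedekindEta
        rw [norm_mul, norm_mul]
        congr 1
        · rw [Complex.norm_exp, Complex.norm_exp]
          congr 1
          simp [mul_add]
        · congr 2
          ext n
          congr 1
          rw [mul_add, Complex.exp_add]
          have := Complex.exp_nat_mul_two_pi_mul_I (n + 1)
          push_cast at this
          rw [mul_one, show 2 * (π : ℂ) * Complex.I * ((n : ℂ) + 1)
            = ((n : ℂ) + 1) * (2 * π * Complex.I) by ring, this, mul_one]
      simp only [hF]
      rw [h1, h2, h3]
      simp
  | one => rw [hinv]; simp
  | mul x y _ _ hx hy =>
    rw [hinv] at *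
    intro τ
    rw [mul_smul, hx, hy]
  | inv x _ hx =>
    rw [hinv] at *
    intro τ
    rw [← hx (x⁻¹ • τ), smul_inv_smul]

lemma aux_bilinC_im {ι : Type*} [Fintype ι] (S : Matrix ι ι ℤ) (x : ι → ℚ) (z : ι → ℂ) :
    (bilinC S (fun i => (x i : ℂ)) z).im
      = bilinR S (fun i => (x i : ℝ)) (fun i => (z i).im) := by
  simp only [bilinC, bilinR, Complex.im_sum]
  refine Finset.sum_congr rfl fun i _ => Finset.sum_congr rfl fun j _ => ?_
  have : (x i : ℂ) * (S i j : ℂ) = (((x i : ℝ) * (S i j : ℝ) : ℝ) : ℂ) := by push_cast; rfl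
  rw [this, Complex.im_ofReal_mul]

lemma aux_bilinR_cast {ι : Type*} [Fintype ι] (S : Matrix ι ι ℤ) (x y : ι → ℚ) :
    bilinR S (fun i => (x i : ℝ)) (fun i => (y i : ℝ)) = (bilinQ S x y : ℝ) := by
  simp [bilinR, bilinQ]

lemma aux_bilinR_add {ι : Type*} [Fintype ι] (S : Matrix ι ι ℤ) (hS : S.IsSymm)
    (x y : ι → ℝ) (c : ℝ) :
    bilinR S (fun i => x i + c * y i) (fun i => x i + c * y i)
      = bilinR S x x + 2 * c * bilinR S x y + c ^ 2 * bilinR S y y := by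
  have hsymm : bilinR S x y = bilinR S y x := by
    simp only [bilinR]
    rw [Finset.sum_comm]
    refine Finset.sum_congr rfl fun i _ => Finset.sum_congr rfl fun j _ => ?_
    rw [hS.apply]; ring
  have : 2 * c * bilinR S x y = c * bilinR S x y + c * bilinR S y x := by rw [← hsymm]; ring
  rw [this]
  simp only [bilinR, Finset.mul_sum, ← Finset.sum_add_distrib]
  refine Finset.sum_congr rfl fun i _ => Finset.sum_congr rfl fun j _ => ?_
  ring

lemma aux_bilinR_smul {ι : Type*} [Fintype ι] (S : Matrix ι ι ℤ)
    (x y : ι → ℝ) (a b : ℝ) :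
    bilinR S (fun i => a * x i) (fun i => b * y i) = a * b * bilinR S x y := by
  simp only [bilinR, Finset.mul_sum]
  refine Finset.sum_congr rfl fun i _ => Finset.sum_congr rfl fun j _ => ?_
  ring

lemma aux_psd {ι : Type*} [Fintype ι] (S : Matrix ι ι ℤ) (hS : IsEvenPosDef S) (y : ι → ℝ) :
    0 ≤ bilinR S y y := by
  have hd : DenseRange (fun x : ι → ℚ => fun i => (x i : ℝ)) :=
    DenseRange.piMap (fun _ => Rat.denseRange_cast)
  refine hd.induction_on (p := fun y => 0 ≤ bilinR S y y) y ?_ ?_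
  · apply isClosed_le continuous_const
    unfold bilinR
    fun_prop
  · intro x
    rw [aux_bilinR_cast]
    by_cases hx : x = 0
    · subst hx; simp [bilinQ]
    · exact_mod_cast (hS.posdef x hx).le

lemma aux_norm_term {ι : Type*} [Fintype ι] (S : Matrix ι ι ℤ) (p : ℚ × (ι → ℚ)) (c : ℂ)
    (τ : ℂ) (z : ι → ℂ) :
    ‖c * Complex.exp (2 * (π : ℂ) * I *
          ((p.1 : ℂ) * τ + bilinC S (fun i => (p.2 i : ℂ)) z))‖
      = ‖c‖ * Real.exp (-(2 * π) * ((p.1 : ℝ) * τ.im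
          + bilinR S (fun i => (p.2 i : ℝ)) (fun i => (z i).im))) := by
  rw [norm_mul, Complex.norm_exp, ← aux_bilinC_im]
  congr 2
  have h1 : ((p.1 : ℂ) * τ).im = (p.1 : ℝ) * τ.im := by
    rw [← Complex.im_ofReal_mul]; simp
  have h2 : ∀ w : ℂ, (2 * (π : ℂ) * I * w).re = -(2 * π) * w.im := by
    intro w; simp
  rw [h2, Complex.add_im, h1]

lemma aux_bound1 {ι : Type*} [Fintype ι] (S : Matrix ι ι ℤ) (hS : IsEvenPosDef S)
    (k t : ℚ) (ht : 0 < t) (χ : SL2Z → ℂ) (ν : (ι → ℤ) → (ι → ℤ) → ℂ)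
    (f : ℚ × (ι → ℚ) → ℂ) (φ : ℂ → (ι → ℂ) → ℂ) (hφ : IsJacobiForm S k t χ ν f φ) :
    ∃ C : ℝ, 0 ≤ C ∧ ∀ τ : ℂ, 1 / 2 ≤ τ.im → ∀ w : ι → ℝ, (∀ i, 0 ≤ w i ∧ w i ≤ 1) →
      ∀ z : ι → ℂ, (∀ i, (z i).im = τ.im * w i) →
      ‖φ τ z‖ * Real.exp (-(π * t * bilinR S (fun i => (z i).im) (fun i => (z i).im) / τ.im))
        ≤ C := by
  set T : Finset ι → ℚ × (ι → ℚ) → ℝ := fun s p =>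
    ‖f p‖ * Real.exp (-π * ((p.1 : ℝ) + ∑ i ∈ s, ∑ j, (p.2 j : ℝ) * (S j i : ℝ))) with hT
  have hTs : ∀ s, Summable (T s) := by
    intro s
    have h := (hφ.expansion (I / 2) (by simp)
      (fun i => if i ∈ s then I / 2 else 0)).summable.norm
    refine h.congr fun p => ?_
    rw [aux_norm_term]
    simp only [hT]
    congr 2
    have : bilinR S (fun i => (p.2 i : ℝ)) (fun i => (if i ∈ s then I / 2 else 0 : ℂ).im)
        = (1 / 2) * ∑ i ∈ s, ∑ j, (p.2 j : ℝ) * (S j i : ℝ) := by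
      unfold bilinR
      rw [Finset.sum_comm, Finset.mul_sum, ← Finset.sum_subset (Finset.subset_univ s)]
      · refine Finset.sum_congr rfl fun i hi => ?_
        rw [Finset.mul_sum]
        refine Finset.sum_congr rfl fun j _ => ?_
        simp [hi]; ring
      · intro i _ hi
        simp [hi]
    rw [this]
    simp
    ring
  refine ⟨∑ s ∈ Finset.univ.powerset, ∑' p, T s p, ?_, ?_⟩
  · refine Finset.sum_nonneg fun s _ => tsum_nonneg fun p => ?_
    simp only [hT]; positivity
  · intro τ hτ w hw z hz
    have hv : 0 < τ.im := by linarith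
    have hE := hφ.expansion τ hv z
    have hn : ‖φ τ z‖ ≤ ∑' p : ℚ × (ι → ℚ), ‖f p‖ * Real.exp (-(2 * π) * ((p.1 : ℝ) * τ.im
          + bilinR S (fun i => (p.2 i : ℝ)) (fun i => (z i).im))) := by
      rw [← hE.tsum_eq]
      simp_rw [← aux_norm_term]
      exact norm_tsum_le_tsum_norm hE.summable.norm
    have hsum : Summable (fun p : ℚ × (ι → ℚ) => ‖f p‖ * Real.exp (-(2 * π) * ((p.1 : ℝ) * τ.im
          + bilinR S (fun i => (p.2 i : ℝ)) (fun i => (z i).im)))) := by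
      have := hE.summable.norm
      simp_rw [aux_norm_term] at this
      exact this
    refine (mul_le_mul_of_nonneg_right hn (Real.exp_pos _).le).trans ?_
    rw [← tsum_mul_right, ← Summable.tsum_finsetSum (fun s _ => hTs s)]
    refine Summable.tsum_le_tsum ?_ (hsum.mul_right _) (summable_sum fun s _ => hTs s)
    intro p
    simp only [hT]
    rw [← Finset.mul_sum, mul_assoc]
    by_cases hp : f p = 0
    · simp [hp]
    refine mul_le_mul_of_nonneg_left ?_ (norm_nonneg _)
    obtain ⟨-, -, hsupp⟩ := hφ.support p hp
    set l : ι → ℝ := fun i => (p.2 i : ℝ) with hl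
    have htR : (0 : ℝ) < t := by exact_mod_cast ht
    have hsuppR : (0 : ℝ) ≤ 2 * p.1 * t - bilinR S l l := by
      rw [hl, aux_bilinR_cast]; exact_mod_cast hsupp
    have hz' : (fun i => (z i).im) = fun i => τ.im * w i := funext hz
    have hzl : bilinR S l (fun i => (z i).im) = τ.im * bilinR S l w := by
      have := aux_bilinR_smul S l w 1 τ.im
      simp only [one_mul] at this
      rw [hz', this]
    rw [hzl, hz', aux_bilinR_smul]
    have hww := aux_psd S hS w
    have hlw := aux_psd S hS (fun i => l i + (t : ℝ) * w i)
    rw [aux_bilinR_add S hS.symm] at hlw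
    set B := bilinR S w w
    set A := bilinR S l w with hA
    have hEpos : 0 ≤ (p.1 : ℝ) + A + t / 2 * B := by
      have : 0 ≤ (2 * t) * ((p.1 : ℝ) + A + t / 2 * B) := by nlinarith
      exact nonneg_of_mul_nonneg_right this (by positivity)
    rw [← Real.exp_add]
    have step1 : -(2 * π) * ((p.1 : ℝ) * τ.im + τ.im * A)
        + -(π * t * (τ.im * τ.im * B) / τ.im) ≤ -π * p.1 + -π * A := by
      have e1 : -(2 * π) * ((p.1 : ℝ) * τ.im + τ.im * A)
        + -(π * t * (τ.im * τ.im * B) / τ.im)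
          = -(2 * π * τ.im) * ((p.1 : ℝ) + A + t / 2 * B) := by
        field_simp
        ring
      rw [e1]
      have h1 : π * ((p.1 : ℝ) + A + t / 2 * B) ≤ 2 * π * τ.im * ((p.1 : ℝ) + A + t / 2 * B) := by
        apply mul_le_mul_of_nonneg_right _ hEpos
        nlinarith [Real.pi_pos]
      have h2 : 0 ≤ π * (t / 2 * B) := by have := Real.pi_pos; positivity
      linarith
    refine (Real.exp_le_exp.2 step1).trans ?_
    have hA' : A = ∑ i, (∑ j, (p.2 j : ℝ) * (S j i : ℝ)) * w i := by
      rw [hA]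
      unfold bilinR
      rw [Finset.sum_comm]
      refine Finset.sum_congr rfl fun i _ => ?_
      rw [Finset.sum_mul]
    rw [Real.exp_add]
    simp_rw [mul_add, Real.exp_add]
    rw [← Finset.mul_sum]
    refine mul_le_mul_of_nonneg_left ?_ (Real.exp_pos _).le
    have hprod := Finset.prod_one_add (s := (Finset.univ : Finset ι))
      (f := fun i => Real.exp (-π * ∑ j, (p.2 j : ℝ) * (S j i : ℝ)))
    simp_rw [← Real.exp_sum, ← Finset.mul_sum] at hprod
    rw [← hprod, hA', Finset.mul_sum, Real.exp_sum]
    refine Finset.prod_le_prod (fun _ _ => (Real.exp_pos _).le) fun i _ => ?_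
    set c := ∑ j, (p.2 j : ℝ) * (S j i : ℝ)
    obtain ⟨h0, h1⟩ := hw i
    rcases le_total 0 c with hc | hc
    · have : Real.exp (-π * (c * w i)) ≤ 1 := by
        rw [Real.exp_le_one_iff]
        have := mul_nonneg Real.pi_pos.le (mul_nonneg hc h0)
        linarith
      linarith [Real.exp_pos (-π * c)]
    · have : Real.exp (-π * (c * w i)) ≤ Real.exp (-π * c) := by
        rw [Real.exp_le_exp]
        have : c ≤ c * w i := by nlinarith
        nlinarith [Real.pi_pos]
      linarith

/-- The invariant modulus of a Jacobi form. -/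
def auxG {ι : Type*} [Fintype ι] (S : Matrix ι ι ℤ) (t : ℚ) (φ : ℂ → (ι → ℂ) → ℂ)
    (τ : ℂ) (z : ι → ℂ) : ℝ :=
  ‖φ τ z‖ * Real.exp (-(π * t * bilinR S (fun i => (z i).im) (fun i => (z i).im) / τ.im))

lemma aux_bound2 {ι : Type*} [Fintype ι] (S : Matrix ι ι ℤ) (hS : IsEvenPosDef S)
    (k t : ℚ) (ht : 0 < t) (χ : SL2Z → ℂ) (ν : (ι → ℤ) → (ι → ℤ) → ℂ)
    (hν : ∀ x y, ‖ν x y‖ = 1)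
    (f : ℚ × (ι → ℚ) → ℂ) (φ : ℂ → (ι → ℂ) → ℂ) (hφ : IsJacobiForm S k t χ ν f φ) :
    ∃ C : ℝ, 0 ≤ C ∧ ∀ τ : ℂ, 1 / 2 ≤ τ.im → ∀ z : ι → ℂ, auxG S t φ τ z ≤ C := by
  obtain ⟨C, hC, h⟩ := aux_bound1 S hS k t ht χ ν f φ hφ
  refine ⟨C, hC, fun τ hτ z => ?_⟩
  have hv : 0 < τ.im := by linarith
  set x : ι → ℤ := fun i => -⌊(z i).im / τ.im⌋ with hx
  have hell := hφ.elliptic x 0 τ hv z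
  have h1 := h τ hτ (fun i => Int.fract ((z i).im / τ.im))
    (fun i => ⟨Int.fract_nonneg _, (Int.fract_lt_one _).le⟩)
    (fun i => z i + (x i : ℂ) * τ + ((0 : ι → ℤ) i : ℂ)) (fun i => by
      have e1 : (z i).im = τ.im * ((⌊(z i).im / τ.im⌋ : ℝ) + Int.fract ((z i).im / τ.im)) := by
        rw [Int.floor_add_fract]; field_simp
      have e2 : (z i + (x i : ℂ) * τ + ((0 : ι → ℤ) i : ℂ)).im
          = (z i).im + -(⌊(z i).im / τ.im⌋ : ℝ) * τ.im := by
        simp [hx]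
      rw [e2]
      linear_combination e1)
  refine le_trans (le_of_eq ?_) h1
  rw [hell, norm_mul, norm_mul, hν, one_mul, Complex.norm_exp]
  unfold auxG
  rw [mul_comm (Real.exp _) ‖φ τ z‖, mul_assoc ‖φ τ z‖, ← Real.exp_add]
  congr 2
  have him : (fun i => (z i + (x i : ℂ) * τ + ((0 : ι → ℤ) i : ℂ)).im)
      = fun i => (z i).im + τ.im * (x i : ℝ) := by
    funext i
    simp
    ring
  rw [him, aux_bilinR_add S hS.symm]
  have hxq : (fun i => (x i : ℂ)) = fun i => (((x i : ℤ) : ℚ) : ℂ) := by funext i; simp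
  have hb := aux_bilinC_im S (fun i => (x i : ℚ)) z
  rw [← hxq] at hb
  have hbz : (bilinZ S x x : ℝ) = bilinR S (fun i => (x i : ℝ)) (fun i => (x i : ℝ)) := by
    simp [bilinZ, bilinR]
  have hsymm : bilinR S (fun i => (z i).im) (fun i => (x i : ℝ))
      = bilinR S (fun i => (x i : ℝ)) (fun i => (z i).im) := by
    simp only [bilinR]
    rw [Finset.sum_comm]
    refine Finset.sum_congr rfl fun i _ => Finset.sum_congr rfl fun j _ => ?_
    rw [hS.symm.apply]; ring
  have hre : ∀ w : ℂ, (-((π : ℂ) * I * (t : ℂ)) * w).re = π * t * w.im := by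
    intro w
    have : -((π : ℂ) * I * (t : ℂ)) * w = ((π * t : ℝ) : ℂ) * (-(I * w)) := by
      push_cast; ring
    rw [this, Complex.re_ofReal_mul]
    simp
  rw [hre]
  have h3 : ((bilinZ S x x : ℂ) * τ + 2 * bilinC S (fun i => (x i : ℂ)) z).im
      = (bilinZ S x x : ℝ) * τ.im + 2 * (bilinC S (fun i => (x i : ℂ)) z).im := by
    simp
  rw [h3, hb, hbz, hsymm]
  simp only [Rat.cast_intCast]
  field_simp
  ring

lemma aux_mod_alg (x₁ y₁ x₂ y₂ r c v : ℝ) (hv : 0 < v) (j : ℂ) (hj : j ≠ 0) (hr : j.re = r)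
    (hi : j.im = c * v) (z₁ z₂ : ℂ) (h1 : z₁.re = x₁) (h2 : z₁.im = y₁) (h3 : z₂.re = x₂)
    (h4 : z₂.im = y₂) :
    (z₁ / j).im * (z₂ / j).im * ‖j‖ ^ 2 / v + ((c : ℂ) * z₁ * z₂ / j).im = y₁ * y₂ / v := by
  have hn : ‖j‖ ^ 2 = r ^ 2 + c ^ 2 * v ^ 2 := by
    rw [← Complex.normSq_eq_norm_sq, Complex.normSq_apply, hr, hi]; ring
  have hn0 : r ^ 2 + c ^ 2 * v ^ 2 ≠ 0 := by
    rw [← hn]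
    have := norm_pos_iff.2 hj
    positivity
  have hns : Complex.normSq j = r ^ 2 + c ^ 2 * v ^ 2 := by
    rw [Complex.normSq_eq_norm_sq, hn]
  rw [Complex.div_im, Complex.div_im, Complex.div_im, hns, hn]
  simp only [Complex.mul_re, Complex.mul_im, Complex.ofReal_re, Complex.ofReal_im, hr, hi,
    h1, h2, h3, h4]
  field_simp
  ring

lemma aux_mod {ι : Type*} [Fintype ι] (S : Matrix ι ι ℤ)
    (k : ℤ) (t : ℚ) (χ : SL2Z → ℂ) (hχ : ∀ A, ‖χ A‖ = 1) (ν : (ι → ℤ) → (ι → ℤ) → ℂ)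
    (f : ℚ × (ι → ℚ) → ℂ) (φ : ℂ → (ι → ℂ) → ℂ) (hφ : IsJacobiForm S (k : ℚ) t χ ν f φ)
    (A : SL2Z) (τ : UpperHalfPlane) (z : ι → ℂ) :
    auxG S t φ (A • τ : UpperHalfPlane) (fun i => z i / ((A.1 1 0 : ℂ) * τ + (A.1 1 1 : ℂ)))
      = ‖(A.1 1 0 : ℂ) * τ + (A.1 1 1 : ℂ)‖ ^ k * auxG S t φ τ z := by
  have hm := hφ.modular A τ τ.im_pos z
  rw [← aux_smul_coe] at hm
  have him : ((A • τ : UpperHalfPlane) : ℂ).im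
    = τ.im / ‖(A.1 1 0 : ℂ) * τ + (A.1 1 1 : ℂ)‖ ^ 2 := aux_smul_im A τ
  unfold auxG
  rw [hm, him]
  have hj := aux_den_ne A τ
  set j := (A.1 1 0 : ℂ) * τ + (A.1 1 1 : ℂ) with hjdef
  have hcast : (((k : ℤ) : ℚ) : ℂ) = ((k : ℤ) : ℂ) := by simp
  rw [norm_mul, norm_mul, norm_mul, hχ, one_mul, hcast, Complex.cpow_intCast, norm_zpow,
    Complex.norm_exp]
  rw [mul_assoc, mul_assoc]
  congr 1
  rw [mul_left_comm, ← Real.exp_add]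
  congr 2
  have hre : ((π : ℂ) * I * (t : ℂ) * (A.1 1 0 : ℂ) * bilinC S z z / j).re
      = -(π * t * ((A.1 1 0 : ℂ) * bilinC S z z / j).im) := by
    have : (π : ℂ) * I * (t : ℂ) * (A.1 1 0 : ℂ) * bilinC S z z / j
      = ((π * t : ℝ) : ℂ) * (I * ((A.1 1 0 : ℂ) * bilinC S z z / j)) := by
      push_cast; ring
    rw [this, Complex.re_ofReal_mul]
    simp
  rw [hre]
  have hnj := norm_pos_iff.2 hj
  have hv : 0 < τ.im := τ.im_pos
  have hkey : bilinR S (fun i => (z i / j).im) (fun i => (z i / j).im) * ‖j‖ ^ 2 / τ.im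
      + ((A.1 1 0 : ℂ) * bilinC S z z / j).im
      = bilinR S (fun i => (z i).im) (fun i => (z i).im) / τ.im := by
    simp only [bilinR, bilinC, Finset.mul_sum, Finset.sum_mul, Finset.sum_div, Complex.im_sum,
      ← Finset.sum_add_distrib]
    refine Finset.sum_congr rfl fun i _ => Finset.sum_congr rfl fun i' _ => ?_
    have := aux_mod_alg _ _ _ _ _ (A.1 1 0 : ℝ) τ.im hv j hj rfl (by simp [hjdef])
      (z i) (z i') rfl rfl rfl rfl
    have e : (A.1 1 0 : ℂ) * (z i * (S i i' : ℂ) * z i') / j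
        = ((S i i' : ℝ) : ℂ) * (((A.1 1 0 : ℝ) : ℂ) * z i * z i' / j) := by
      push_cast; ring
    rw [e, Complex.im_ofReal_mul]
    linear_combination (S i i' : ℝ) * this
  have hτ' : (τ : ℂ).im = τ.im := rfl
  rw [hτ', mul_div_assoc (π * (t : ℝ)) _ τ.im, ← hkey]
  field_simp
  ring

lemma aux_bound3 {ι : Type*} [Fintype ι] (S : Matrix ι ι ℤ) (hS : IsEvenPosDef S)
    (k : ℤ) (t : ℚ) (ht : 0 < t) (χ : SL2Z → ℂ) (hχ : ∀ A, ‖χ A‖ = 1)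
    (ν : (ι → ℤ) → (ι → ℤ) → ℂ) (hν : ∀ x y, ‖ν x y‖ = 1)
    (f : ℚ × (ι → ℚ) → ℂ) (φ : ℂ → (ι → ℂ) → ℂ) (hφ : IsJacobiForm S (k : ℚ) t χ ν f φ) :
    ∃ C : ℝ, 0 ≤ C ∧ ∀ τ : ℂ, 0 < τ.im → ∀ z : ι → ℂ,
      auxG S t φ τ z ≤ C * (2 + 2 * τ.im + 1 / τ.im) ^ k.natAbs := by
  obtain ⟨C, hC, h⟩ := aux_bound2 S hS k t ht χ ν hν f φ hφ
  refine ⟨C, hC, fun τ0 hτ0 z => ?_⟩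
  obtain ⟨τ, rfl⟩ : ∃ τ : UpperHalfPlane, (τ : ℂ) = τ0 := ⟨⟨τ0, hτ0⟩, rfl⟩
  obtain ⟨A, hA⟩ := ModularGroup.exists_smul_mem_fd τ
  have him3 := ModularGroup.three_le_four_mul_im_sq_of_mem_fd hA
  have hp := (A • τ : UpperHalfPlane).im_pos
  have hhalf : 1 / 2 ≤ (A • τ : UpperHalfPlane).im := by nlinarith
  have hm := aux_mod S k t χ hχ ν f φ hφ A τ z
  have hb := h (A • τ : UpperHalfPlane) hhalf
    (fun i => z i / ((A.1 1 0 : ℂ) * τ + (A.1 1 1 : ℂ)))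
  rw [hm] at hb
  rw [aux_smul_im] at hhalf
  have hj := norm_pos_iff.2 (aux_den_ne A τ)
  have hv : 0 < τ.im := τ.im_pos
  have hτ' : (τ : ℂ).im = τ.im := rfl
  rw [hτ']
  have hlow : 1 / ‖(A.1 1 0 : ℂ) * τ + (A.1 1 1 : ℂ)‖ ≤ 1 + 1 / τ.im := by
    by_cases hc : A.1 1 0 = 0
    · have hd : A.1 1 1 ≠ 0 := by
        intro hd
        have := aux_den_ne A τ
        simp [hc, hd] at this
      have h1 : (1 : ℝ) ≤ ‖(A.1 1 0 : ℂ) * τ + (A.1 1 1 : ℂ)‖ := by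
        rw [hc]
        simp only [Int.cast_zero, zero_mul, zero_add, Complex.norm_intCast]
        exact_mod_cast Int.one_le_abs hd
      have : 1 / ‖(A.1 1 0 : ℂ) * τ + (A.1 1 1 : ℂ)‖ ≤ 1 := by
        rw [div_le_one hj]; exact h1
      have : 0 < 1 / τ.im := by positivity
      linarith
    · have h1 : τ.im ≤ ‖(A.1 1 0 : ℂ) * τ + (A.1 1 1 : ℂ)‖ := by
        have h2 := Complex.abs_im_le_norm ((A.1 1 0 : ℂ) * τ + (A.1 1 1 : ℂ))
        have h3 : ((A.1 1 0 : ℂ) * τ + (A.1 1 1 : ℂ)).im = (A.1 1 0 : ℝ) * τ.im := by simp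
        rw [h3, abs_mul, abs_of_pos hv] at h2
        have h4 : (1 : ℝ) ≤ |(A.1 1 0 : ℝ)| := by exact_mod_cast Int.one_le_abs hc
        nlinarith
      have := one_div_le_one_div_of_le hv h1
      linarith
  set J := ‖(A.1 1 0 : ℂ) * τ + (A.1 1 1 : ℂ)‖
  have hup : J ≤ 1 + 2 * τ.im := by
    rw [le_div_iff₀ (by positivity)] at hhalf
    nlinarith [sq_nonneg (J - 1)]
  have hJ : J ^ (-k) ≤ (2 + 2 * τ.im + 1 / τ.im) ^ k.natAbs := by
    have hi : 0 < 1 / τ.im := by positivity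
    rcases Int.natAbs_eq k with hk | hk
    · rw [hk, Int.natAbs_natCast, _root_.zpow_neg, zpow_natCast, ← inv_pow, ← one_div]
      apply pow_le_pow_left₀ (by positivity)
      linarith
    · rw [hk, neg_neg, zpow_natCast, Int.natAbs_neg, Int.natAbs_natCast]
      apply pow_le_pow_left₀ (by positivity)
      linarith
  have hG : 0 ≤ auxG S t φ τ z := by unfold auxG; positivity
  calc auxG S t φ τ z = J ^ (-k) * (J ^ k * auxG S t φ τ z) := by
        rw [← mul_assoc, ← zpow_add₀ hj.ne']; simp
    _ ≤ J ^ (-k) * C := by gcongr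
    _ ≤ _ := by rw [mul_comm]; gcongr

lemma aux_phi_bound {ι : Type*} [Fintype ι] (S : Matrix ι ι ℤ) (t : ℚ)
    (φ : ℂ → (ι → ℂ) → ℂ) (C : ℝ) (hC : 0 ≤ C) (κ : ℕ)
    (hb : ∀ τ : ℂ, 0 < τ.im → ∀ z : ι → ℂ,
      auxG S t φ τ z ≤ C * (2 + 2 * τ.im + 1 / τ.im) ^ κ)
    (v1 v2 : ℝ) (hv1 : 0 < v1) (τ : ℂ) (h1 : v1 ≤ τ.im) (h2 : τ.im ≤ v2) (z : ι → ℂ)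
    (a d : ℕ) (ha : 0 < a) (hd : 0 < d) (b Q : ℕ) :
    ‖φ (((a : ℂ) * τ + (b : ℂ) * (Q : ℂ)) / (d : ℂ)) (fun i => (a : ℂ) * z i)‖
      ≤ C * (((a * d : ℕ) : ℝ) * (2 + 2 * v2 + 1 / v1)) ^ κ
        * Real.exp (π * t * ((a * d : ℕ) : ℝ)
          * bilinR S (fun i => (z i).im) (fun i => (z i).im) / τ.im) := by
  have hv : 0 < τ.im := by linarith
  have haR : (1 : ℝ) ≤ a := by exact_mod_cast ha
  have hdR : (1 : ℝ) ≤ d := by exact_mod_cast hd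
  have ha0 : (0 : ℝ) < a := by linarith
  have hd0 : (0 : ℝ) < d := by linarith
  have him : (((a : ℂ) * τ + (b : ℂ) * (Q : ℂ)) / (d : ℂ)).im = a * τ.im / d := by
    rw [Complex.div_natCast_im]
    simp
  have hpos : 0 < (((a : ℂ) * τ + (b : ℂ) * (Q : ℂ)) / (d : ℂ)).im := by
    rw [him]; positivity
  have h := hb _ hpos (fun i => (a : ℂ) * z i)
  unfold auxG at h
  rw [him] at h
  have hz : (fun i => ((a : ℂ) * z i).im) = fun i => (a : ℝ) * (z i).im := by
    funext i; simp
  rw [hz, aux_bilinR_smul] at h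
  set B := bilinR S (fun i => (z i).im) (fun i => (z i).im)
  have he : π * t * ((a : ℝ) * a * B) / (a * τ.im / d)
      = π * t * ((a * d : ℕ) : ℝ) * B / τ.im := by
    push_cast
    field_simp
  rw [he, Real.exp_neg, ← div_eq_mul_inv, div_le_iff₀ (Real.exp_pos _)] at h
  refine h.trans ?_
  gcongr
  push_cast
  have e1 : (a : ℝ) * τ.im / d ≤ a * d * v2 := by
    rw [div_le_iff₀ hd0]
    have : (1 : ℝ) ≤ d * d := by nlinarith
    have h0 : (a : ℝ) * τ.im ≤ a * v2 := by gcongr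
    have h00 : 0 ≤ (a : ℝ) * v2 := by have := hv.le.trans h2; positivity
    nlinarith
  have e2 : 1 / ((a : ℝ) * τ.im / d) ≤ a * d * (1 / v1) := by
    rw [one_div_div, mul_one_div, div_le_div_iff₀ (by positivity) hv1]
    have : (1 : ℝ) ≤ a * a := by nlinarith
    have h0 : (d : ℝ) * v1 ≤ d * τ.im := by gcongr
    have h00 : 0 ≤ (d : ℝ) * τ.im := by positivity
    nlinarith
  have e3 : (1 : ℝ) ≤ a * d := by nlinarith
  linarith

lemma aux_term_bound {ι : Type*} [Fintype ι] (S : Matrix ι ι ℤ) (t : ℚ)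
    (φ : ℂ → (ι → ℂ) → ℂ) (C : ℝ) (hC : 0 ≤ C) (k : ℤ)
    (hb : ∀ τ : ℂ, 0 < τ.im → ∀ z : ι → ℂ,
      auxG S t φ τ z ≤ C * (2 + 2 * τ.im + 1 / τ.im) ^ k.natAbs)
    (vη : SL2Z → ℂ) (hvη : ∀ A, ‖vη A‖ = 1) (σ : ℕ → SL2Z) (Q : ℕ) (μ : ℤ)
    (v1 v2 δ : ℝ) (hv1 : 0 < v1) (m : ℕ) (p : ℂ × (ι → ℂ) × ℂ)
    (h1 : v1 ≤ p.1.im) (h2 : p.1.im ≤ v2)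
    (h3 : δ ≤ 2 * p.2.2.im / Q
      - t * bilinR S (fun i => (p.2.1 i).im) (fun i => (p.2.1 i).im) / p.1.im) :
    ‖liftTerm φ vη σ k Q μ m p‖ ≤ C * (2 + 2 * v2 + 1 / v1) ^ k.natAbs
      * ((m : ℝ) ^ (1 + 2 * k.natAbs) * Real.exp (-(π * δ) * m)) := by
  have hv : 0 < p.1.im := by linarith
  have hK : 0 ≤ 2 + 2 * v2 + 1 / v1 := by
    have : 0 < v2 := by linarith
    positivity
  unfold liftTerm
  split_ifs with hm
  swap
  · rw [norm_zero]; positivity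
  have hm1 : 1 ≤ m := hm.1
  have hmR : (1 : ℝ) ≤ m := by exact_mod_cast hm1
  set B := bilinR S (fun i => (p.2.1 i).im) (fun i => (p.2.1 i).im) with hB
  set K := 2 + 2 * v2 + 1 / v1
  set κ := k.natAbs with hκ
  set M : ℝ := (m : ℝ) ^ κ * (C * ((m : ℝ) * K) ^ κ * Real.exp (π * t * m * B / p.1.im)) with hM
  have hM0 : 0 ≤ M := by positivity
  have hhecke : ‖heckeSum φ vη σ k Q m p.1 p.2.1‖ ≤ m * (m * M) := by
    unfold heckeSum
    have hone : ∀ a ∈ m.divisors, ∀ b ∈ Finset.range (m / a),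
        ‖(a : ℂ) ^ k * vη (σ a) * φ (((a : ℂ) * p.1 + (b : ℂ) * (Q : ℂ)) / ((m / a : ℕ) : ℂ))
          (fun i => (a : ℂ) * p.2.1 i)‖ ≤ M := by
      intro a ha b _
      have had := Nat.dvd_of_mem_divisors ha
      have ha0 : 0 < a := Nat.pos_of_mem_divisors ha
      have hd0 : 0 < m / a := Nat.div_pos (Nat.le_of_dvd hm1 had) ha0
      have := aux_phi_bound S t φ C hC κ hb v1 v2 hv1 p.1 h1 h2 p.2.1 a (m / a) ha0 hd0 b Q
      rw [Nat.mul_div_cancel' had] at this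
      rw [norm_mul, norm_mul, hvη, mul_one, norm_zpow, Complex.norm_natCast]
      refine mul_le_mul ?_ this (norm_nonneg _) (by positivity)
      have haR : (1 : ℝ) ≤ a := by exact_mod_cast ha0
      have ham : (a : ℝ) ≤ m := by exact_mod_cast Nat.le_of_dvd hm1 had
      calc (a : ℝ) ^ k ≤ (a : ℝ) ^ (κ : ℤ) := zpow_le_zpow_right₀ haR Int.le_natAbs
        _ = (a : ℝ) ^ κ := zpow_natCast _ _
        _ ≤ (m : ℝ) ^ κ := by gcongr
    calc _ ≤ ∑ a ∈ m.divisors, ((m : ℝ) * M) := by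
          refine norm_sum_le_of_le _ fun a ha => ?_
          refine (norm_sum_le_of_le _ (hone a ha)).trans ?_
          rw [Finset.sum_const, Finset.card_range, nsmul_eq_mul]
          gcongr
          exact Nat.div_le_self m a
      _ ≤ m * (m * M) := by
          rw [Finset.sum_const, nsmul_eq_mul]
          gcongr
          exact Nat.card_divisors_le_self m
  have hexp : ‖Complex.exp (2 * (π : ℂ) * I * ((m : ℂ) / (Q : ℂ)) * p.2.2)‖
      = Real.exp (-(π * m * (2 * p.2.2.im / Q))) := by
    rw [Complex.norm_exp]
    congr 1
    have : 2 * (π : ℂ) * I * ((m : ℂ) / (Q : ℂ)) * p.2.2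
      = ((2 * π * (m / Q) : ℝ) : ℂ) * (I * p.2.2) := by push_cast; ring
    rw [this, Complex.re_ofReal_mul]
    simp
    ring
  rw [norm_mul, norm_mul, norm_inv, Complex.norm_natCast, hexp]
  calc (m : ℝ)⁻¹ * ‖heckeSum φ vη σ k Q m p.1 p.2.1‖ * Real.exp (-(π * m * (2 * p.2.2.im / Q)))
      ≤ (m : ℝ)⁻¹ * (m * (m * M)) * Real.exp (-(π * m * (2 * p.2.2.im / Q))) := by gcongr
    _ = C * K ^ κ * ((m : ℝ) ^ (1 + 2 * κ) * (Real.exp (π * t * m * B / p.1.im)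
          * Real.exp (-(π * m * (2 * p.2.2.im / Q))))) := by
        rw [hM, mul_pow]
        field_simp
        ring
    _ ≤ _ := by
        rw [← Real.exp_add]
        gcongr
        have e : π * t * m * B / p.1.im + -(π * m * (2 * p.2.2.im / Q))
          = -(π * m) * (2 * p.2.2.im / Q - t * B / p.1.im) := by ring
        rw [e]
        have := mul_le_mul_of_nonneg_left h3 (by positivity : 0 ≤ π * (m : ℝ))
        linarith

lemma aux_liftTerm_diff {ι : Type*} [Fintype ι]
    (φ : ℂ → (ι → ℂ) → ℂ)
    (hφ : DifferentiableOn ℂ (fun p : ℂ × (ι → ℂ) => φ p.1 p.2) {p | 0 < p.1.im})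
    (vη : SL2Z → ℂ) (σ : ℕ → SL2Z) (k : ℤ) (Q : ℕ) (μ : ℤ) (m : ℕ)
    (U : Set (ℂ × (ι → ℂ) × ℂ)) (hU : ∀ p ∈ U, 0 < p.1.im) :
    DifferentiableOn ℂ (liftTerm φ vη σ k Q μ m) U := by
  unfold liftTerm
  by_cases hm : 1 ≤ m ∧ (m : ℤ) ≡ μ [ZMOD (Q : ℤ)]
  swap
  · simp only [hm, if_false]
    exact differentiableOn_const _
  simp only [hm, and_self, if_true]
  refine DifferentiableOn.mul (DifferentiableOn.mul (differentiableOn_const _) ?_)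
    (by fun_prop)
  unfold heckeSum
  refine DifferentiableOn.fun_sum fun a ha => DifferentiableOn.fun_sum fun b _ => ?_
  refine DifferentiableOn.mul (differentiableOn_const _) ?_
  have had := Nat.dvd_of_mem_divisors ha
  have ha0 : 0 < a := Nat.pos_of_mem_divisors ha
  have hd0 : 0 < m / a := Nat.div_pos (Nat.le_of_dvd hm.1 had) ha0
  refine DifferentiableOn.comp (g := fun p : ℂ × (ι → ℂ) => φ p.1 p.2)
    (f := fun p : ℂ × (ι → ℂ) × ℂ => ((((a : ℂ) * p.1 + (b : ℂ) * (Q : ℂ)) / ((m / a : ℕ) : ℂ)),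
      (fun i => (a : ℂ) * p.2.1 i))) hφ ?_ ?_
  · fun_prop
  · intro p hp
    have := hU p hp
    show 0 < (((a : ℂ) * p.1 + (b : ℂ) * (Q : ℂ)) / ((m / a : ℕ) : ℂ)).im
    rw [Complex.div_natCast_im]
    have : (0 : ℝ) < a := by exact_mod_cast ha0
    have : (0 : ℝ) < (m / a : ℕ) := by exact_mod_cast hd0
    have e : ((a : ℂ) * p.1 + (b : ℂ) * (Q : ℂ)).im = a * p.1.im := by simp
    rw [e]
    positivity

/-- The lifting series
`∑_{m ≥ 1, m ≡ μ (Q)} m⁻¹ (φ|_k T_-^{(Q)}(m))(τ,𝔷) e^{2πi(m/Q)ω}`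
converges absolutely and locally uniformly on the tube domain `H(L(Qt))`, and hence defines
a holomorphic function there. -/
theorem statement8 {ι : Type*} [Fintype ι] (S : Matrix ι ι ℤ) (hS : IsEvenPosDef S)
    (k : ℤ) (t : ℚ) (ht : 0 < t)
    (D : ℕ) (hD2 : Even D) (hD24 : D ∣ 24) (hDpos : 0 < D)
    (Q : ℕ) (hQ : Q = 24 / D)
    (vη : SL2Z → ℂ)
    (hvη : ∀ A : SL2Z, ∀ τ : ℂ, 0 < τ.im →
      dedekindEta (((A.1 0 0 : ℂ) * τ + (A.1 0 1 : ℂ))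
            / ((A.1 1 0 : ℂ) * τ + (A.1 1 1 : ℂ))) ^ D
        = vη A * ((A.1 1 0 : ℂ) * τ + (A.1 1 1 : ℂ)) ^ (D / 2) * dedekindEta τ ^ D)
    (ν : (ι → ℤ) → (ι → ℤ) → ℂ) (hν : ∀ x y, HasFiniteOrder (ν x y))
    (hνtriv : Odd Q → ∀ x y, ν x y = 1)
    (f : ℚ × (ι → ℚ) → ℂ) (φ : ℂ → (ι → ℂ) → ℂ)
    (hφ : IsJacobiForm S (k : ℚ) t vη ν f φ)
    (μ : ℤ) (hμ : IsCoprime μ (Q : ℤ))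
    (σ : ℕ → SL2Z) (hσ : ∀ a : ℕ, 0 < a → Nat.Coprime a Q → SigmaCond Q a (σ a)) :
    ∃ G : ℂ × (ι → ℂ) × ℂ → ℂ,
      DifferentiableOn ℂ G (tubeDom S ((Q : ℚ) * t)) ∧
      TendstoLocallyUniformlyOn
        (fun (s : Finset ℕ) (p : ℂ × (ι → ℂ) × ℂ) => ∑ m ∈ s, liftTerm φ vη σ k Q μ m p)
        G Filter.atTop (tubeDom S ((Q : ℚ) * t)) ∧
      ∀ p ∈ tubeDom S ((Q : ℚ) * t),
        Summable (fun m : ℕ => ‖liftTerm φ vη σ k Q μ m p‖) ∧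
        HasSum (fun m : ℕ => liftTerm φ vη σ k Q μ m p) (G p) := by
  have hχ := aux_char D hD2 vη hvη
  have hν1 : ∀ x y, ‖ν x y‖ = 1 := by
    intro x y
    obtain ⟨N, hN, h⟩ := hν x y
    exact Complex.norm_eq_one_of_pow_eq_one h hN.ne'
  have hQ0 : 0 < Q := by
    rw [hQ]; exact Nat.div_pos (Nat.le_of_dvd (by norm_num) hD24) hDpos
  have hQR : (0 : ℝ) < Q := by exact_mod_cast hQ0
  obtain ⟨C, hC, hb⟩ := aux_bound3 S hS k t ht vη hχ ν hν1 f φ hφ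
  have hcB : Continuous (fun p : ℂ × (ι → ℂ) × ℂ =>
      bilinR S (fun i => (p.2.1 i).im) (fun i => (p.2.1 i).im)) := by
    unfold bilinR
    fun_prop
  have hopen : IsOpen (tubeDom S ((Q : ℚ) * t)) := by
    have o1 : IsOpen {p : ℂ × (ι → ℂ) × ℂ | 0 < p.1.im} :=
      isOpen_lt continuous_const (by fun_prop)
    have o2 : IsOpen {p : ℂ × (ι → ℂ) × ℂ | 0 < p.2.2.im} :=
      isOpen_lt continuous_const (by fun_prop)
    have o3 : IsOpen {p : ℂ × (ι → ℂ) × ℂ | (((Q : ℚ) * t : ℚ) : ℝ)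
        * bilinR S (fun i => (p.2.1 i).im) (fun i => (p.2.1 i).im) < 2 * p.1.im * p.2.2.im} :=
      isOpen_lt (continuous_const.mul hcB) (by fun_prop)
    exact o1.inter (o2.inter o3)
  apply aux_weier
  · intro m
    exact aux_liftTerm_diff φ hφ.holo vη σ k Q μ m _ (fun p hp => hp.1)
  · intro p hp
    obtain ⟨hp1, hp2, hp3⟩ := hp
    set H : ℂ × (ι → ℂ) × ℂ → ℝ := fun p => 2 * p.2.2.im / Q
      - t * bilinR S (fun i => (p.2.1 i).im) (fun i => (p.2.1 i).im) / p.1.im with hH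
    have hHp : 0 < H p := by
      simp only [hH]
      rw [sub_pos, div_lt_div_iff₀ hp1 hQR]
      push_cast at hp3
      linarith
    have hHc : ContinuousAt H p := by
      refine ContinuousAt.sub (by fun_prop) (ContinuousAt.div ?_ (by fun_prop) hp1.ne')
      exact (continuous_const.mul hcB).continuousAt
    have e1 : ∀ᶠ q in nhds p, H p / 2 < H q := hHc.eventually_const_lt (by linarith)
    have hic : ContinuousAt (fun q : ℂ × (ι → ℂ) × ℂ => q.1.im) p := by fun_prop
    have e2 : ∀ᶠ q in nhds p, p.1.im / 2 < q.1.im := hic.eventually_const_lt (by linarith)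
    have e3 : ∀ᶠ q in nhds p, q.1.im < 2 * p.1.im := hic.eventually_lt_const (by linarith)
    have e4 : ∀ᶠ q in nhds p, q ∈ tubeDom S ((Q : ℚ) * t) :=
      hopen.mem_nhds ⟨hp1, hp2, hp3⟩
    obtain ⟨r, hr, hball⟩ := Metric.eventually_nhds_iff_ball.1 (e1.and (e2.and (e3.and e4)))
    refine ⟨r, hr, fun m : ℕ => C * (2 + 2 * (2 * p.1.im) + 1 / (p.1.im / 2)) ^ k.natAbs
      * ((m : ℝ) ^ (1 + 2 * k.natAbs) * Real.exp (-(π * (H p / 2)) * m)), ?_,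
      fun q hq => (hball q hq).2.2.2, fun m q hq => ?_⟩
    rotate_left
    · obtain ⟨q1, q2, q3, -⟩ := hball q hq
      exact aux_term_bound S t φ C hC k hb vη hχ σ Q μ (p.1.im / 2) (2 * p.1.im) (H p / 2)
        (by linarith) m q q2.le q3.le q1.le
    · refine Summable.mul_left _ ?_
      exact Real.summable_pow_mul_exp_neg_nat_mul _ (by have := Real.pi_pos; positivity)
end
end
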